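/- There are exactly 2962 conjugacy classes of finite-index subgroups Γ̄ of PSL(2,ℤ) that have genus zero and satisfy n + 3·e₂(Γ̄) + 2·e₃(Γ̄) = 24, where n is the index of Γ̄. -/

import Mathlib

open Matrix

/-- `SL(2,ℤ)`: the group of 2×2 integer matrices of determinant 1. -/
abbrev SL2Z := Matrix.SpecialLinearGroup (Fin 2) ℤ

instance : Fact (Even (Fintype.card (Fin 2))) := ⟨by simp⟩

/-- The subgroup `{±I}` of `SL(2,ℤ)`. -/
def pmOne : Subgroup SL2Z := Subgroup.zpowers (-1 : SL2Z)

instance : pmOne.Normal := by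
  constructor
  intro x hx g
  obtain ⟨n, rfl⟩ := hx
  have h : Commute ((-1 : SL2Z) ^ n) g := (Commute.neg_one_left g).zpow_left n
  refine ⟨n, ?_⟩
  rw [← h.eq, mul_assoc, mul_inv_cancel, mul_one]

/-- `PSL(2,ℤ)`, the modular group, as the quotient of `SL(2,ℤ)` by `{±I}`. -/
abbrev PSL2Z := SL2Z ⧸ pmOne

/-- The natural projection `ξ : SL(2,ℤ) → PSL(2,ℤ)`. -/
def xi : SL2Z →* PSL2Z := QuotientGroup.mk' pmOne

/-- The element `S` of `PSL(2,ℤ)`, the image of `[[0,-1],[1,0]]`. -/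
def Sp : PSL2Z := xi ⟨!![0, -1; 1, 0], by norm_num [Matrix.det_fin_two_of]⟩

/-- The element `T` of `PSL(2,ℤ)`, the image of `[[1,1],[0,1]]`. -/
def Tp : PSL2Z := xi ⟨!![1, 1; 0, 1], by norm_num [Matrix.det_fin_two_of]⟩

/-- The number of left cosets in `PSL(2,ℤ)/Γ` fixed by `g` (for the
left-multiplication action).  For `g = S` this is `e₂(Γ)`, for `g = S*T` it is `e₃(Γ)`. -/
noncomputable def nFix (g : PSL2Z) (Γ : Subgroup PSL2Z) : ℕ :=
  Nat.card {x : PSL2Z ⧸ Γ // g • x = x}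

/-- The number of orbits of the cyclic subgroup generated by `g` on `PSL(2,ℤ)/Γ`.
For `g = S, S*T, T` these are `c₂(Γ), c₃(Γ), h(Γ)` respectively. -/
noncomputable def nOrb (g : PSL2Z) (Γ : Subgroup PSL2Z) : ℕ :=
  Nat.card (MulAction.orbitRel.Quotient (Subgroup.zpowers g) (PSL2Z ⧸ Γ))

/-- `Γ` has genus zero: `c₂(Γ) + c₃(Γ) + h(Γ) = index(Γ) + 2`. -/
def GenusZero (Γ : Subgroup PSL2Z) : Prop :=
  nOrb Sp Γ + nOrb (Sp * Tp) Γ + nOrb Tp Γ = Γ.index + 2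

/-- `Γ` is torsion free: it contains no nontrivial element of finite order. -/
def TorsionFree (Γ : Subgroup PSL2Z) : Prop :=
  ∀ x ∈ Γ, x ≠ 1 → ¬ IsOfFinOrder x

/-- Two subgroups of a group are conjugate. -/
def SubgroupConj {G : Type*} [Group G] (H K : Subgroup G) : Prop :=
  ∃ g : G, Subgroup.map (MulAut.conj g).toMonoidHom H = K

/-- The number of conjugacy classes of subgroups of `PSL(2,ℤ)` satisfying `P`. -/
noncomputable def countClasses (P : Subgroup PSL2Z → Prop) : ℕ :=
  Nat.card (Quot fun A B : {Γ : Subgroup PSL2Z // P Γ} => SubgroupConj A.1 B.1)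

/-- The index of the torsion free subgroup `Γ^tf` associated to `Γ`:
`index(Γ) + 3·e₂(Γ) + 2·e₃(Γ)`. -/
noncomputable def tfIdx (Γ : Subgroup PSL2Z) : ℕ :=
  Γ.index + 3 * nFix Sp Γ + 2 * nFix (Sp * Tp) Γ

/-!
Since `PSL(2,ℤ)` is the free product of the groups generated by `S` and `U = S T`, of orders two and
three, a subgroup is a transitive action of `S` and `U` with a base point. If `n + 3 e₂ + 2 e₃ = 24`
then `n ≤ 24`, and genus zero says that `e₂ + e₃ + h = 6`.

The classes are counted by weighted orbits of rooted actions. Among `S, U, T, T ^ 2, T ^ 3, T ^ 4`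
some word has a fixed coset: otherwise all `h = 6` cycles of `T` would have length at least `5`,
while `n = 24`. If `w` is the first such word, then a class has `nFix w` rooted representatives that
contain `w`, and giving each of them the weight `24! / nFix w` gives every class the total weight
`24!`. Isomorphic roots are one subgroup, which is therefore counted as often as it is a coset
stabilizer, that is, with the index in its normalizer as multiplicity.

For each word the weighted sum over all subgroups is computed by a depth-first search through
partial coset tables: at each step the image under `S` of the first coset for which it is still
undefined is chosen among the free cosets, or is a new coset, which is fixed by `U` or lies in a new
triangle of `U`. Tables of total weight above `24`, and tables where an earlier word is seen to fix
a coset or `w` to move the root, are discarded.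
-/

open scoped Pointwise ENNReal

namespace PSL2Z

/-- The element `U = S T` of order three; `S` and `U` are free generators of `PSL(2,ℤ)` as a product
of cyclic groups. -/
def U : PSL2Z := Sp * Tp

theorem xi_surjective : Function.Surjective xi := QuotientGroup.mk'_surjective _

theorem xi_S : xi ModularGroup.S = Sp := rfl

theorem xi_T : xi ModularGroup.T = Tp := rfl

theorem xi_neg_one : xi (-1) = 1 :=
  (QuotientGroup.eq_one_iff _).2 (Subgroup.mem_zpowers (-1 : SL2Z))

theorem eq_or_eq_neg_of_xi_eq {A B : SL2Z} (h : xi A = xi B) : A = B ∨ A = -B := by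
  obtain ⟨n, hn⟩ : B⁻¹ * A ∈ pmOne := QuotientGroup.eq.1 h.symm
  obtain rfl : A = B * (-1) ^ n := eq_mul_of_inv_mul_eq hn.symm
  rcases Int.even_or_odd n with he | ho
  · exact .inl (by rw [he.neg_one_zpow, mul_one])
  · exact .inr (by rw [ho.neg_one_zpow, mul_neg_one])

theorem Sp_sq : Sp ^ 2 = 1 := by
  have h : ModularGroup.S ^ 2 = (-1 : SL2Z) := by decide +revert
  rw [← xi_S, ← map_pow, h, xi_neg_one]

theorem U_pow_three : U ^ 3 = 1 := by
  have h : (ModularGroup.S * ModularGroup.T) ^ 3 = (-1 : SL2Z) := by decide +revert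
  rw [U, ← xi_S, ← xi_T, ← map_mul, ← map_pow, h, xi_neg_one]

theorem Sp_mul_U : Sp * U = Tp := by
  rw [U, ← mul_assoc, ← sq, Sp_sq, one_mul]

theorem closure_Sp_U : Subgroup.closure {Sp, U} = ⊤ := by
  have hST : Subgroup.closure {Sp, Tp} = ⊤ := by
    have h := congrArg (Subgroup.map xi) SpecialLinearGroup.SL2Z_generators
    rwa [MonoidHom.map_closure, Subgroup.map_top_of_surjective _ xi_surjective, Set.image_pair] at h
  have hS : Sp ∈ Subgroup.closure {Sp, U} := Subgroup.subset_closure (.inl rfl)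
  have hU : U ∈ Subgroup.closure {Sp, U} := Subgroup.subset_closure (.inr rfl)
  rw [eq_top_iff, ← hST, Subgroup.closure_le]
  rintro x (rfl | rfl)
  · exact hS
  · exact Sp_mul_U ▸ mul_mem hS hU

theorem induction_Sp_U {P : PSL2Z → Prop} (one : P 1) (Sp_mul : ∀ g, P g → P (Sp * g))
    (U_mul : ∀ g, P g → P (U * g)) (g : PSL2Z) : P g := by
  have hg : g ∈ Subgroup.closure {Sp, U} := closure_Sp_U ▸ Subgroup.mem_top g
  have hSp : Sp⁻¹ = Sp := inv_eq_of_mul_eq_one_left (by rw [← sq, Sp_sq])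
  have hU : U⁻¹ = U * U := inv_eq_of_mul_eq_one_left (by rw [← sq, ← pow_succ, U_pow_three])
  induction hg using Subgroup.closure_induction_left with
  | one => exact one
  | mul_left x hx y _ ih =>
    rcases hx with rfl | rfl
    · exact Sp_mul _ ih
    · exact U_mul _ ih
  | inv_mul_cancel x hx y _ ih =>
    rcases hx with rfl | rfl
    · rw [hSp]; exact Sp_mul _ ih
    · rw [hU, mul_assoc]; exact U_mul _ (U_mul _ ih)

/-- The two free factors `⟨S⟩` (at `false`) and `⟨U⟩` (at `true`) of `PSL(2,ℤ)`. -/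
abbrev factor (b : Bool) : Subgroup PSL2Z := Subgroup.zpowers (bif b then U else Sp)

/-- The domains of the ping-pong game: classes of matrices whose first column has entries of
opposite signs (at `true`) or of the same sign (at `false`). -/
def domain (b : Bool) : Set PSL2Z :=
  xi '' {A | bif b then A 0 0 * A 1 0 < 0 else 0 < A 0 0 * A 1 0}

theorem xi_mem_domain_false {A : SL2Z} : 0 < A 0 0 * A 1 0 → xi A ∈ domain false :=
  fun h => ⟨A, h, rfl⟩

theorem xi_mem_domain_true {A : SL2Z} : A 0 0 * A 1 0 < 0 → xi A ∈ domain true :=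
  fun h => ⟨A, h, rfl⟩

theorem domain_nonempty (b : Bool) : (domain b).Nonempty := by
  cases b
  · exact ⟨_, xi_mem_domain_false (A := ⟨!![1, 0; 1, 1], by simp⟩) (by simp)⟩
  · exact ⟨_, xi_mem_domain_true (A := ⟨!![1, 0; -1, 1], by simp⟩) (by simp)⟩

theorem disjoint_domain : Disjoint (domain false) (domain true) := by
  rw [Set.disjoint_left]
  rintro _ ⟨A, hA : 0 < A 0 0 * A 1 0, rfl⟩ ⟨B, hB : B 0 0 * B 1 0 < 0, hBA⟩
  rcases eq_or_eq_neg_of_xi_eq hBA with rfl | rfl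
  · exact lt_asymm hA hB
  · simp only [SpecialLinearGroup.coe_neg, neg_apply, neg_mul_neg] at hB
    exact lt_asymm hA hB

theorem Sp_mul_mem_domain {q : PSL2Z} (hq : q ∈ domain true) : Sp * q ∈ domain false := by
  obtain ⟨A, hA : A 0 0 * A 1 0 < 0, rfl⟩ := hq
  have h : xi (ModularGroup.S * A) ∈ domain false := xi_mem_domain_false <| by
    simp [ModularGroup.coe_S, mul_apply, Fin.sum_univ_two]
    linarith
  rwa [map_mul] at h

theorem U_mul_mem_domain {q : PSL2Z} (hq : q ∈ domain false) : U * q ∈ domain true := by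
  obtain ⟨A, hA : 0 < A 0 0 * A 1 0, rfl⟩ := hq
  have h : xi (ModularGroup.S * ModularGroup.T * A) ∈ domain true := xi_mem_domain_true <| by
    simp [ModularGroup.coe_S, ModularGroup.coe_T, mul_apply, Fin.sum_univ_two]
    nlinarith [sq_nonneg (A 1 0)]
  rwa [map_mul, map_mul] at h

theorem U_sq_mul_mem_domain {q : PSL2Z} (hq : q ∈ domain false) : U ^ 2 * q ∈ domain true := by
  obtain ⟨A, hA : 0 < A 0 0 * A 1 0, rfl⟩ := hq
  have h : xi ((ModularGroup.S * ModularGroup.T) ^ 2 * A) ∈ domain true := xi_mem_domain_true <| by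
    simp [ModularGroup.coe_S, ModularGroup.coe_T, mul_apply, Fin.sum_univ_two, sq]
    nlinarith [sq_nonneg (A 0 0)]
  rwa [map_mul, map_pow, map_mul] at h

theorem Sp_ne_one : Sp ≠ 1 := by
  obtain ⟨q, hq⟩ := domain_nonempty true
  rintro h
  exact disjoint_domain.notMem_of_mem_right hq (by simpa [h] using Sp_mul_mem_domain hq)

theorem U_ne_one : U ≠ 1 := by
  obtain ⟨q, hq⟩ := domain_nonempty false
  rintro h
  exact disjoint_domain.notMem_of_mem_left hq (by simpa [h] using U_mul_mem_domain hq)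

theorem orderOf_Sp : orderOf Sp = 2 := orderOf_eq_prime Sp_sq Sp_ne_one

theorem orderOf_U : orderOf U = 3 := orderOf_eq_prime U_pow_three U_ne_one

theorem exists_lt_pow_eq {G : Type*} [Group G] {g h : G} {n : ℕ} (hn : 0 < n) (hg : orderOf g = n)
    (hh : h ∈ Subgroup.zpowers g) : ∃ k < n, g ^ k = h := by
  classical
  have hfin : IsOfFinOrder g := orderOf_pos_iff.1 (hg ▸ hn)
  simpa [hg] using hfin.mem_zpowers_iff_mem_range_orderOf.1 hh

theorem smul_domain_subset {b c : Bool} (hbc : b ≠ c) {h : PSL2Z} (hmem : h ∈ factor b)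
    (hne : h ≠ 1) : h • domain c ⊆ domain b := by
  rintro _ ⟨q, hq, rfl⟩
  cases b <;> obtain rfl := Bool.eq_not_of_ne hbc.symm
  · obtain ⟨n, hn, rfl⟩ := exists_lt_pow_eq two_pos orderOf_Sp hmem
    interval_cases n
    · exact (hne (pow_zero _)).elim
    · simpa using Sp_mul_mem_domain hq
  · obtain ⟨n, hn, rfl⟩ := exists_lt_pow_eq three_pos orderOf_U hmem
    interval_cases n
    · exact (hne (pow_zero _)).elim
    · simpa using U_mul_mem_domain hq
    · exact U_sq_mul_mem_domain hq

theorem lift_factor_injective :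
    Function.Injective (Monoid.CoprodI.lift fun b => (factor b).subtype) := by
  refine Monoid.CoprodI.lift_injective_of_ping_pong _ (.inr ⟨true, ?_⟩) domain domain_nonempty ?_
    fun b c hbc h hh => smul_domain_subset hbc h.2 (by simpa using hh)
  · have h : Nat.card (factor true) = 3 := (Nat.card_zpowers U).trans orderOf_U
    have := Nat.finite_of_card_ne_zero (α := factor true) (by omega)
    rw [← Nat.cast_card, h]
    rfl
  · rintro (_ | _) (_ | _) hbc
    exacts [(hbc rfl).elim, disjoint_domain, disjoint_domain.symm, (hbc rfl).elim]

theorem lift_factor_surjective :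
    Function.Surjective (Monoid.CoprodI.lift fun b => (factor b).subtype) := by
  rw [← MonoidHom.range_eq_top, eq_top_iff, ← closure_Sp_U, Subgroup.closure_le]
  rintro x (rfl | rfl)
  · exact ⟨.of (i := false) ⟨Sp, Subgroup.mem_zpowers Sp⟩, Monoid.CoprodI.lift_of _ _⟩
  · exact ⟨.of (i := true) ⟨U, Subgroup.mem_zpowers U⟩, Monoid.CoprodI.lift_of _ _⟩

theorem exists_monoidHom {H : Type*} [Group H] {s u : H} (hs : s ^ 2 = 1) (hu : u ^ 3 = 1) :
    ∃ f : PSL2Z →* H, f Sp = s ∧ f U = u := by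
  have hS : orderOf s ∣ orderOf (⟨Sp, Subgroup.mem_zpowers Sp⟩ : factor false) := by
    rw [Subgroup.orderOf_mk, orderOf_Sp]; exact orderOf_dvd_of_pow_eq_one hs
  have hU : orderOf u ∣ orderOf (⟨U, Subgroup.mem_zpowers U⟩ : factor true) := by
    rw [Subgroup.orderOf_mk, orderOf_U]; exact orderOf_dvd_of_pow_eq_one hu
  have hgen {x : PSL2Z} (y : Subgroup.zpowers x) :
      y ∈ Subgroup.zpowers (⟨x, Subgroup.mem_zpowers x⟩ : Subgroup.zpowers x) := by
    obtain ⟨_, n, rfl⟩ := y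
    exact ⟨n, rfl⟩
  let F : Monoid.CoprodI (fun b => factor b) →* H := Monoid.CoprodI.lift fun
    | false => monoidHomOfForallMemZpowers hgen hS
    | true => monoidHomOfForallMemZpowers hgen hU
  let E := MulEquiv.ofBijective _ ⟨lift_factor_injective, lift_factor_surjective⟩
  have hE (b : Bool) (x : factor b) : E.symm x = .of x :=
    E.symm_apply_eq.2 (Monoid.CoprodI.lift_of (fun b => (factor b).subtype) x).symm
  refine ⟨F.comp E.symm.toMonoidHom, ?_, ?_⟩
  · exact (congrArg F (hE false ⟨Sp, Subgroup.mem_zpowers Sp⟩)).trans <|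
      (Monoid.CoprodI.lift_of _ _).trans (monoidHomOfForallMemZpowers_apply_gen hgen hS)
  · exact (congrArg F (hE true ⟨U, Subgroup.mem_zpowers U⟩)).trans <|
      (Monoid.CoprodI.lift_of _ _).trans (monoidHomOfForallMemZpowers_apply_gen hgen hU)

end PSL2Z

/-- The number of cosets of `B` with stabilizer `B`, that is, the index of `B` in its normalizer. -/
noncomputable def selfStabilized {G : Type*} [Group G] (B : Subgroup G) : ℕ∞ :=
  ENat.card {x : G ⧸ B // MulAction.stabilizer G x = B}

section Pretransitive

open MulAction

variable {G : Type*} [Group G] {X : Type*}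

theorem exists_equivariant_equiv [MulAction G X] [IsPretransitive G X] (x : X) :
    ∃ e : G ⧸ stabilizer G x ≃ X, e (1 : G) = x ∧
      ∀ (g : G) (y : G ⧸ stabilizer G x), e (g • y) = g • e y := by
  refine ⟨.ofBijective (ofQuotientStabilizer G x) ⟨injective_ofQuotientStabilizer G x, fun y => ?_⟩,
    one_smul G x, ofQuotientStabilizer_smul G x⟩
  obtain ⟨g, rfl⟩ := exists_smul_eq G x y
  exact ⟨g, rfl⟩

theorem selfStabilized_stabilizer [MulAction G X] [IsPretransitive G X] (x : X) :
    selfStabilized (stabilizer G x) = ENat.card {y : X // stabilizer G y = stabilizer G x} := by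
  obtain ⟨e, -, he⟩ := exists_equivariant_equiv (G := G) x
  refine ENat.card_congr (e.subtypeEquiv fun y => ?_)
  have hy : stabilizer G (e y) = stabilizer G y := by
    ext g
    rw [mem_stabilizer_iff, mem_stabilizer_iff, ← he, e.apply_eq_iff_eq]
  rw [hy]

variable [MulAction PSL2Z X] [IsPretransitive PSL2Z X]

theorem nFix_stabilizer (g : PSL2Z) (x : X) :
    nFix g (stabilizer PSL2Z x) = Nat.card {y : X // g • y = y} := by
  obtain ⟨e, -, he⟩ := exists_equivariant_equiv (G := PSL2Z) x
  exact Nat.card_congr (e.subtypeEquiv fun y => by rw [← he, e.apply_eq_iff_eq])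

theorem nOrb_stabilizer (g : PSL2Z) (x : X) :
    nOrb g (stabilizer PSL2Z x) = Nat.card (orbitRel.Quotient (Subgroup.zpowers g) X) := by
  obtain ⟨e, -, he⟩ := exists_equivariant_equiv (G := PSL2Z) x
  refine Nat.card_congr (Quotient.congr e fun y z => exists_congr fun h => ?_)
  change h.1 • z = y ↔ h.1 • e z = e y
  rw [← he, e.apply_eq_iff_eq]

end Pretransitive

namespace SubgroupConj

variable {G : Type*} [Group G] {A B : Subgroup G}

theorem iff_orbit_eq :
    SubgroupConj A B ↔ MulAction.orbit (ConjAct G) B = MulAction.orbit (ConjAct G) A := by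
  rw [MulAction.orbit_eq_iff]
  rfl

theorem equivalence : Equivalence (SubgroupConj (G := G)) where
  refl _ := iff_orbit_eq.2 rfl
  symm h := iff_orbit_eq.2 (iff_orbit_eq.1 h).symm
  trans h h' := iff_orbit_eq.2 ((iff_orbit_eq.1 h').trans (iff_orbit_eq.1 h))

theorem iff_exists_stabilizer_eq :
    SubgroupConj A B ↔ ∃ x : G ⧸ A, MulAction.stabilizer G x = B := by
  have h (g : G) : MulAction.stabilizer G (g : G ⧸ A) = A.map (MulAut.conj g).toMonoidHom := by
    conv_rhs => rw [← MulAction.stabilizer_quotient A]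
    rw [← MulAction.stabilizer_smul_eq_stabilizer_map_conj, MulAction.Quotient.smul_coe,
      smul_eq_mul, mul_one]
  simp only [SubgroupConj, ← h, (QuotientGroup.mk_surjective (s := A)).exists]

theorem index_eq (h : SubgroupConj A B) : A.index = B.index := by
  obtain ⟨x, rfl⟩ := iff_exists_stabilizer_eq.1 h
  exact (MulAction.index_stabilizer_of_transitive G x).symm

theorem nFix_eq {A B : Subgroup PSL2Z} (h : SubgroupConj A B) (g : PSL2Z) :
    nFix g A = nFix g B := by
  obtain ⟨x, rfl⟩ := iff_exists_stabilizer_eq.1 h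
  exact (nFix_stabilizer g x).symm

theorem nOrb_eq {A B : Subgroup PSL2Z} (h : SubgroupConj A B) (g : PSL2Z) :
    nOrb g A = nOrb g B := by
  obtain ⟨x, rfl⟩ := iff_exists_stabilizer_eq.1 h
  exact (nOrb_stabilizer g x).symm

theorem genusZero_iff {A B : Subgroup PSL2Z} (h : SubgroupConj A B) :
    GenusZero A ↔ GenusZero B := by
  simp only [GenusZero, h.nOrb_eq, h.index_eq]

theorem tfIdx_eq {A B : Subgroup PSL2Z} (h : SubgroupConj A B) : tfIdx A = tfIdx B := by
  simp only [tfIdx, h.nFix_eq, h.index_eq]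

end SubgroupConj

theorem tsum_conj_selfStabilized_mul {G : Type*} [Group G] (A : Subgroup G)
    (f : Subgroup G → ℝ≥0∞) :
    ∑' B : {B // SubgroupConj A B}, selfStabilized B.1 * f B =
      ∑' x : G ⧸ A, f (MulAction.stabilizer G x) := by
  let stab (x : G ⧸ A) : {B // SubgroupConj A B} :=
    ⟨MulAction.stabilizer G x, SubgroupConj.iff_exists_stabilizer_eq.2 ⟨x, rfl⟩⟩
  rw [← (Equiv.sigmaFiberEquiv stab).tsum_eq, ENNReal.tsum_sigma']
  refine tsum_congr fun B => ?_
  calc (selfStabilized B.1 : ℝ≥0∞) * f B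
      = ENat.card {x // stab x = B} * f B := by
        obtain ⟨_, hB⟩ := B
        obtain ⟨x, rfl⟩ := SubgroupConj.iff_exists_stabilizer_eq.1 hB
        simp only [selfStabilized_stabilizer, stab, Subtype.ext_iff]
    _ = ∑' _ : {x // stab x = B}, f B := (ENNReal.tsum_const _).symm
    _ = _ := tsum_congr fun x => congrArg f (congrArg Subtype.val x.2).symm

theorem countClasses_eq_of_tsum_eq {P : Subgroup PSL2Z → Prop} {f : Subgroup PSL2Z → ℝ≥0∞}
    {N : ℝ≥0∞} {n : ℕ} (hP : ∀ {A B}, SubgroupConj A B → P A → P B) (hf : ∀ B, ¬P B → f B = 0)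
    (hN : N ≠ 0) (hN' : N ≠ ⊤)
    (hclass : ∀ A, P A → ∑' x : PSL2Z ⧸ A, f (MulAction.stabilizer PSL2Z x) = N)
    (htotal : ∑' B, selfStabilized B * f B = n * N) : countClasses P = n := by
  let R (A B : {Γ // P Γ}) : Prop := SubgroupConj A.1 B.1
  have hR : Equivalence R := SubgroupConj.equivalence.comap Subtype.val
  let w (B : Subgroup PSL2Z) : ℝ≥0∞ := selfStabilized B * f B
  have hfibre (q : Quot R) : ∑' B : {B // Quot.mk R B = q}, w B.1 = N := by
    induction q using Quot.ind with
    | mk A =>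
      let e : {B // Quot.mk R B = Quot.mk R A} ≃ {B // SubgroupConj A.1 B} :=
        { toFun B := ⟨B.1.1, hR.symm ((hR.quot_mk_eq_iff _ _).1 B.2)⟩
          invFun B := ⟨⟨B.1, hP B.2 A.2⟩, (hR.quot_mk_eq_iff _ _).2 (hR.symm B.2)⟩ }
      rw [← hclass A.1 A.2, ← tsum_conj_selfStabilized_mul]
      exact e.tsum_eq fun B => w B.1
  have htsum : ∑' B, w B = ENat.card (Quot R) * N := by
    have hsupp : Function.support w ⊆ {B | P B} := fun B hB => by
      by_contra h
      exact hB (by simp only [w, hf B h, mul_zero])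
    calc ∑' B, w B
        = ∑' B : {Γ // P Γ}, w B := (tsum_subtype_eq_of_support_subset hsupp).symm
      _ = ∑' q : Quot R, ∑' B : {B // Quot.mk R B = q}, w B.1 := by
        rw [← (Equiv.sigmaFiberEquiv (Quot.mk R)).tsum_eq, ENNReal.tsum_sigma']
        rfl
      _ = ENat.card (Quot R) * N := by simp only [hfibre, ENNReal.tsum_const]
  have hcard : ENat.card (Quot R) = n := by
    exact_mod_cast (ENNReal.mul_left_inj hN hN').1 (htsum.symm.trans htotal)
  exact congrArg ENat.toNat hcard

section CyclicOrbits

variable {G X : Type*} [Group G] [MulAction G X] [Finite X] {g : G}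

theorem orderOf_mul_card_orbits {p : ℕ} (hp : p.Prime) (hg : orderOf g = p) :
    p * Nat.card (MulAction.orbitRel.Quotient (Subgroup.zpowers g) X) =
      Nat.card X + (p - 1) * Nat.card {x : X // g • x = x} := by
  classical
  have := Fintype.ofFinite X
  have hcard : Nat.card (Subgroup.zpowers g) = p := (Nat.card_zpowers g).trans hg
  have : Finite (Subgroup.zpowers g) := Nat.finite_of_card_ne_zero (hcard ▸ hp.ne_zero)
  have := Fintype.ofFinite (Subgroup.zpowers g)
  have := Fintype.ofFinite (MulAction.orbitRel.Quotient (Subgroup.zpowers g) X)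
  have : Fact p.Prime := ⟨hp⟩
  have hfixed (a : Subgroup.zpowers g) (ha : a ≠ 1) :
      Fintype.card (MulAction.fixedBy X a) = Nat.card {x : X // g • x = x} := by
    rw [Fintype.card_eq_nat_card]
    obtain ⟨k, hk : a ^ k = _⟩ :=
      mem_zpowers_of_prime_card hcard ha (g' := ⟨g, Subgroup.mem_zpowers g⟩)
    refine Nat.card_congr (Equiv.subtypeEquivRight fun x => ⟨fun hx => ?_, fun hx => ?_⟩)
    · have hx' : a ^ k • x = x := MulAction.fixedBy_subset_fixedBy_zpow X a k hx
      rwa [hk] at hx'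
    · obtain ⟨_, l, rfl⟩ := a
      exact MulAction.fixedBy_subset_fixedBy_zpow X g l hx
  have hBurnside := MulAction.sum_card_fixedBy_eq_card_orbits_mul_card_group (Subgroup.zpowers g) X
  rw [Fintype.sum_eq_add_sum_compl 1, Finset.sum_congr rfl fun a ha => hfixed a (by simpa using ha),
    Finset.sum_const, Finset.card_compl, Finset.card_singleton, smul_eq_mul] at hBurnside
  simp only [Fintype.card_eq_nat_card, hcard, MulAction.fixedBy_one_eq_univ] at hBurnside
  rw [mul_comm, ← hBurnside, Nat.card_univ]

theorem mul_card_orbits_le {r : ℕ} (h : ∀ j, 0 < j → j < r → ∀ x : X, g ^ j • x ≠ x) :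
    r * Nat.card (MulAction.orbitRel.Quotient (Subgroup.zpowers g) X) ≤ Nat.card X := by
  let orbitMap (p : MulAction.orbitRel.Quotient (Subgroup.zpowers g) X × Fin r) : X :=
    g ^ (p.2 : ℕ) • p.1.out
  have hinj : Function.Injective orbitMap := by
    rintro ⟨ω, i⟩ ⟨ω', j⟩ (hij : g ^ (i : ℕ) • ω.out = g ^ (j : ℕ) • ω'.out)
    have hmk (ω : MulAction.orbitRel.Quotient (Subgroup.zpowers g) X) (i : ℕ) :
        (⟦g ^ i • ω.out⟧ : MulAction.orbitRel.Quotient (Subgroup.zpowers g) X) = ω :=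
      (Quotient.sound <| MulAction.mem_orbit _
        (⟨g ^ i, i, zpow_natCast g i⟩ : Subgroup.zpowers g)).trans ω.out_eq
    obtain rfl : ω = ω' := by rw [← hmk ω i, hij, hmk]
    have key {a b : ℕ} (hb : b < r) (hab : a < b) : g ^ a • ω.out ≠ g ^ b • ω.out := fun heq =>
      h (b - a) (by omega) (by omega) (g ^ a • ω.out) <| by
        rw [← mul_smul, ← pow_add, Nat.sub_add_cancel hab.le, heq]
    rcases lt_trichotomy (i : ℕ) j with hlt | heq | hlt
    · exact (key j.2 hlt hij).elim
    · rw [Fin.ext heq]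
    · exact (key i.2 hlt hij.symm).elim
  simpa only [Nat.card_prod, Nat.card_fin, mul_comm] using Nat.card_le_card_of_injective _ hinj

theorem exists_pow_smul_eq {a : G} (ha : a ∈ Subgroup.zpowers g) (x : X) :
    ∃ n : ℕ, g ^ n • x = a • x := by
  obtain ⟨z, rfl⟩ := ha
  have hperiod : 0 < Function.minimalPeriod (g • ·) x :=
    Function.minimalPeriod_pos_of_mem_periodicPts <|
      (MulAction.injective g).mem_periodicPts x
  obtain ⟨n, hn⟩ := Int.eq_ofNat_of_zero_le
    (Int.emod_nonneg z (Int.natCast_ne_zero.2 hperiod.ne'))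
  exact ⟨n, by rw [← zpow_natCast, ← hn, MulAction.zpow_smul_mod_minimalPeriod]⟩

theorem card_orbits_eq_card_least [LinearOrder X] :
    Nat.card (MulAction.orbitRel.Quotient (Subgroup.zpowers g) X) =
      Nat.card {x : X // ∀ n : ℕ, x ≤ g ^ n • x} := by
  have hle {x : X} (hx : ∀ n : ℕ, x ≤ g ^ n • x) {y : X}
      (hy : y ∈ MulAction.orbit (Subgroup.zpowers g) x) : x ≤ y := by
    obtain ⟨a, rfl⟩ := hy
    obtain ⟨n, hn⟩ := exists_pow_smul_eq a.2 x
    exact (hx n).trans_eq hn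
  refine (Nat.card_congr (.ofBijective
    (fun x : {x : X // ∀ n : ℕ, x ≤ g ^ n • x} =>
      (⟦x.1⟧ : MulAction.orbitRel.Quotient (Subgroup.zpowers g) X)) ⟨fun x y hxy => ?_, ?_⟩)).symm
  · have hmem : x.1 ∈ MulAction.orbit (Subgroup.zpowers g) y.1 := Quotient.exact hxy
    exact Subtype.ext ((hle x.2 (MulAction.mem_orbit_symm.1 hmem)).antisymm (hle y.2 hmem))
  · rintro ⟨x⟩
    obtain ⟨y, hy, hmin⟩ :=
      (Set.toFinite (MulAction.orbit (Subgroup.zpowers g) x)).exists_minimalFor id _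
        ⟨x, MulAction.mem_orbit_self x⟩
    refine ⟨⟨y, fun n => ?_⟩, Quotient.sound hy⟩
    have hn : g ^ n • y ∈ MulAction.orbit (Subgroup.zpowers g) x :=
      MulAction.mem_orbit_of_mem_orbit (⟨g ^ n, n, zpow_natCast g n⟩ : Subgroup.zpowers g) hy
    exact (le_total y (g ^ n • y)).elim id (hmin hn)

end CyclicOrbits

section Counted

open MulAction PSL2Z

variable {Γ : Subgroup PSL2Z}

/-- The subgroups to be counted. -/
def Counted (Γ : Subgroup PSL2Z) : Prop := Γ.index ≠ 0 ∧ GenusZero Γ ∧ tfIdx Γ = 24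

theorem Counted.congr {A B : Subgroup PSL2Z} (h : SubgroupConj A B) (hA : Counted A) :
    Counted B :=
  ⟨h.index_eq ▸ hA.1, h.genusZero_iff.1 hA.2.1, h.tfIdx_eq ▸ hA.2.2⟩

theorem Counted.nFix_le (h : Counted Γ) (g : PSL2Z) : nFix g Γ ≤ 24 := by
  have : Γ.FiniteIndex := ⟨h.1⟩
  have hindex : nFix g Γ ≤ Γ.index := Finite.card_subtype_le _
  have htf := h.2.2
  rw [tfIdx] at htf
  omega

theorem genusZero_iff_of_tfIdx_eq (hΓ : Γ.index ≠ 0) (htf : tfIdx Γ = 24) :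
    GenusZero Γ ↔ nOrb Tp Γ + nFix Sp Γ + nFix U Γ = 6 := by
  have : Γ.FiniteIndex := ⟨hΓ⟩
  have h₂ : 2 * nOrb Sp Γ = Γ.index + (2 - 1) * nFix Sp Γ :=
    orderOf_mul_card_orbits Nat.prime_two orderOf_Sp
  have h₃ : 3 * nOrb U Γ = Γ.index + (3 - 1) * nFix U Γ :=
    orderOf_mul_card_orbits Nat.prime_three orderOf_U
  simp only [GenusZero, tfIdx, U] at *
  omega

/-- The words `S, U, T, T ^ 2, T ^ 3, …`, whose fixed cosets are looked for in this order. -/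
def word : ℕ → PSL2Z
  | 0 => Sp
  | 1 => U
  | k + 2 => Tp ^ (k + 1)

theorem Counted.exists_nFix_word_ne_zero (h : Counted Γ) : ∃ k < 6, nFix (word k) Γ ≠ 0 := by
  obtain ⟨hΓ, hgenus, htf⟩ := h
  have : Γ.FiniteIndex := ⟨hΓ⟩
  have hfix {g : PSL2Z} (hg : nFix g Γ = 0) (x : PSL2Z ⧸ Γ) : g • x ≠ x := fun hx =>
    (Finite.card_eq_zero_iff.1 hg).false ⟨x, hx⟩
  by_contra! hnone
  have horb : 5 * nOrb Tp Γ ≤ Γ.index := mul_card_orbits_le fun j hj hj' => hfix <| by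
    obtain ⟨k, rfl⟩ := Nat.exists_eq_add_of_lt hj
    simpa [word] using hnone (k + 2) (by omega)
  have hS : nFix Sp Γ = 0 := hnone 0 (by norm_num)
  have hU : nFix U Γ = 0 := hnone 1 (by norm_num)
  rw [genusZero_iff_of_tfIdx_eq hΓ htf] at hgenus
  simp only [tfIdx] at htf
  omega

end Counted

namespace CosetTable

section Recursors

-- The definitions below are run by the kernel, which reduces explicit recursors fastest; `force`
-- makes it evaluate the number `n` before entering the body `f`.

variable {α : Type} {n i : ℕ} {p : ℕ → Bool}

/-- Branching on a Boolean. -/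
def select (b : Bool) (t e : α) : α := Bool.rec e t b

/-- Application of `f` to the evaluated number `n`. -/
def force (n : ℕ) (f : ℕ → α) : α := Nat.rec (f 0) (fun k _ => f (Nat.succ k)) n

/-- The sum of `f i` over `1 ≤ i ≤ n`. -/
def sumTo (n : ℕ) (f : ℕ → ℕ) : ℕ := Nat.rec 0 (fun i ih => Nat.add ih (f (Nat.succ i))) n

/-- Whether `p i` holds for all `1 ≤ i ≤ n`. -/
def allTo (n : ℕ) (p : ℕ → Bool) : Bool :=
  Nat.rec true (fun i ih => select (p (Nat.succ i)) ih false) n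

/-- The number of `1 ≤ i ≤ n` with `p i`. -/
def countTo (n : ℕ) (p : ℕ → Bool) : ℕ := sumTo n fun i => select (p i) 1 0

/-- The `n`-th iterate of `f`. -/
def iter (f : ℕ → ℕ) (n : ℕ) : ℕ → ℕ := Nat.rec (fun x => x) (fun _ ih x => ih (f x)) n

theorem select_eq_ite (b : Bool) (t e : α) : select b t e = if b then t else e := by
  cases b <;> rfl

theorem force_eq (n : ℕ) (f : ℕ → α) : force n f = f n := by cases n <;> rfl

theorem sumTo_eq_sum (n : ℕ) (f : ℕ → ℕ) : sumTo n f = ∑ i ∈ Finset.Icc 1 n, f i := by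
  induction n with
  | zero => rfl
  | succ n ih => rw [Finset.sum_Icc_succ_top (by omega), ← ih]; rfl

theorem allTo_iff : allTo n p = true ↔ ∀ i ∈ Finset.Icc 1 n, p i = true := by
  induction n with
  | zero => simp [allTo]
  | succ n ih =>
    have h : allTo (n + 1) p = select (p (n + 1)) (allTo n p) false := rfl
    simp [h, select_eq_ite, ih, ← Finset.insert_Icc_right_eq_Icc_add_one]

theorem countTo_eq_card (n : ℕ) (p : ℕ → Bool) :
    countTo n p = ((Finset.Icc 1 n).filter (p ·)).card := by
  simp only [countTo, sumTo_eq_sum, select_eq_ite, Finset.card_filter]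

theorem iter_eq_iterate (f : ℕ → ℕ) (n : ℕ) : iter f n = f^[n] := by
  induction n with
  | zero => rfl
  | succ n ih => funext x; exact congrFun ih (f x)

end Recursors

section Digits

variable {t i j v : ℕ}

-- Kernel literals are hashed by their low 64 bits, so an even base would make large codes collide.
/-- The value at `i` of the finitely supported function `ℕ → {0, …, 36}` coded by `t` in base
`37`. -/
def entry (t i : ℕ) : ℕ := Nat.mod (Nat.div t (Nat.pow 37 i)) 37

/-- Changes the value at `i` from `0` to `v`. -/
def setEntry (t i v : ℕ) : ℕ := Nat.add t (Nat.mul v (Nat.pow 37 i))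

theorem entry_zero (i : ℕ) : entry 0 i = 0 := by
  change 0 / 37 ^ i % 37 = 0
  simp

theorem entry_setEntry (h : entry t i = 0) (hv : v < 37) (j : ℕ) :
    entry (setEntry t i v) j = if j = i then v else entry t j := by
  change t / 37 ^ i % 37 = 0 at h
  change (t + v * 37 ^ i) / 37 ^ j % 37 = if j = i then v else t / 37 ^ j % 37
  rcases lt_trichotomy j i with hji | rfl | hij
  · obtain ⟨n, rfl⟩ := Nat.exists_eq_add_of_lt hji
    have hpow : v * 37 ^ (j + n + 1) = 37 ^ j * (37 * (v * 37 ^ n)) := by ring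
    rw [if_neg hji.ne, hpow, Nat.add_mul_div_left _ _ (by positivity), Nat.add_mul_mod_self_left]
  · rw [if_pos rfl, Nat.add_mul_div_right _ _ (by positivity), Nat.add_mod, h, zero_add,
      Nat.mod_mod, Nat.mod_eq_of_lt hv]
  · obtain ⟨n, rfl⟩ := Nat.exists_eq_add_of_lt hij
    obtain ⟨q, hq⟩ := Nat.dvd_of_mod_eq_zero h
    have hpow : 37 ^ (i + n + 1) = 37 ^ i * 37 * 37 ^ n := by ring
    rw [if_neg hij.ne', hpow, ← Nat.div_div_eq_div_mul, ← Nat.div_div_eq_div_mul,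
      Nat.add_mul_div_right _ _ (by positivity), hq, Nat.mul_add_div (by norm_num),
      Nat.div_eq_of_lt hv, ← Nat.div_div_eq_div_mul, ← Nat.div_div_eq_div_mul, hq,
      Nat.mul_div_cancel_left _ (by norm_num), add_zero]

end Digits

end CosetTable

/-- A partial coset table: an initial part of the permutation action of `S` and `U` on the cosets of
a subgroup, the cosets being numbered from `1` on, the base coset by `1`. -/
structure CosetTable where
  size : ℕ
  weight : ℕ
  sCode : ℕ
  uCode : ℕ

namespace CosetTable

/-- The number of the image under `S` of the coset numbered `i`, or `0` if it is still undefined. -/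
def s (t : CosetTable) (i : ℕ) : ℕ := entry t.sCode i

/-- The number of the image under `U` of the coset numbered `i`. -/
def u (t : CosetTable) (i : ℕ) : ℕ := entry t.uCode i

/-- The table with no cosets. -/
def empty : CosetTable := ⟨0, 0, 0, 0⟩

/-- Sets `S • d = e` and `S • e = d`. -/
def close (t : CosetTable) (d e : ℕ) : CosetTable :=
  select (Nat.beq d e) { t with weight := t.weight + 3, sCode := setEntry t.sCode d d }
    { t with sCode := setEntry (setEntry t.sCode d e) e d }

/-- Adds a new coset that is fixed by `U`. -/
def addLoop (t : CosetTable) : CosetTable :=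
  { t with
    size := t.size + 1
    weight := t.weight + 3
    uCode := setEntry t.uCode (t.size + 1) (t.size + 1) }

/-- Adds three new cosets that are permuted cyclically by `U`. -/
def addTriangle (t : CosetTable) : CosetTable :=
  { t with
    size := t.size + 3
    weight := t.weight + 3
    uCode := setEntry (setEntry (setEntry t.uCode (t.size + 1) (t.size + 2))
      (t.size + 2) (t.size + 3)) (t.size + 3) (t.size + 1) }

/-- The action of `word k` on the numbered cosets, `0` where it is still undefined. -/
def act (t : CosetTable) : ℕ → ℕ → ℕ
  | 0 => t.s
  | 1 => t.u
  | k + 2 => iter (fun i => t.s (t.u i)) (k + 1)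

/-- Whether none of the first `k` words is known to fix the coset numbered `i`. -/
def avoids (t : CosetTable) (k i : ℕ) : Bool :=
  Nat.rec true (fun j ih => select (Nat.beq (t.act j i) i) false ih) k

/-- Whether `t`, in which `S • d` has just been defined, may belong to a subgroup that contains
`word k` and no conjugate of an earlier word. -/
def ok (k d : ℕ) (t : CosetTable) : Bool :=
  select (Nat.ble t.weight 24) (select (t.avoids k d)
    (select (t.avoids k (t.s d)) (Nat.ble (t.act k 1) 1) false) false) false

/-- Whether the orbit of `x` under `f`, followed for `fuel` steps, meets no number below `i` before
it meets `i`. -/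
def isLeast (f : ℕ → ℕ) (i fuel x : ℕ) : Bool :=
  Nat.rec (motive := fun _ => ℕ → Bool) (fun _ => true) (fun _ ih x => force (f x) fun y =>
    select (Nat.ble y i) (Nat.beq y i) (ih y)) fuel x

/-- The number of cycles of `T` on a complete table. -/
def cycles (t : CosetTable) : ℕ :=
  countTo t.size fun i => isLeast (fun x => t.s (t.u x)) i t.size i

/-- The code of the only possible equivariant map that sends `1` to `r`, on the numbers up to `n`
of a complete table. -/
def image (t : CosetTable) (r n : ℕ) : ℕ :=
  Nat.rec (setEntry 0 1 r) (fun i ih => force ih fun F =>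
    select (Nat.beq i 0) F (setEntry F (Nat.succ i)
      (select (Nat.beq (t.u i) (Nat.succ i)) (t.u (entry F i))
        (t.s (entry F (t.s (Nat.succ i))))))) n

/-- Whether a complete table has an equivariant map that sends `1` to `r`. -/
def isAut (t : CosetTable) (r : ℕ) : Bool := force (t.image r t.size) fun F =>
  allTo t.size fun i => select (Nat.beq (entry F (t.s i)) (t.s (entry F i)))
    (Nat.beq (entry F (t.u i)) (t.u (entry F i))) false

/-- The contribution of a complete table to the weighted number of subgroups that contain `word k`
and no conjugate of an earlier word. -/
def value (k : ℕ) (t : CosetTable) : ℕ :=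
  select (Nat.beq t.weight 24) (select (Nat.beq (t.act k 1) 1) (select (allTo t.size (t.avoids k))
    (select (Nat.beq (t.cycles + countTo t.size (fun i => Nat.beq (t.s i) i) +
        countTo t.size (fun i => Nat.beq (t.u i) i)) 6)
      (Nat.mul (Nat.div (Nat.factorial 24) (countTo t.size fun i => Nat.beq (t.act k i) i))
        (countTo t.size fun r =>
          select (Nat.beq (t.act k r) r) (select (Nat.beq r 1) true (t.isAut r)) false))
      0) 0) 0) 0

/-- Application of `f` to the table with evaluated entries. -/
def eval {α : Type} (t : CosetTable) (f : CosetTable → α) : α :=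
  force t.size fun m => force t.weight fun w => force t.sCode fun s => force t.uCode fun u =>
    f ⟨m, w, s, u⟩

/-- Continues the search with the next coset at an admissible table. -/
def visit (k d : ℕ) (next : ℕ → CosetTable → ℕ) (t : CosetTable) : ℕ :=
  t.eval fun t => select (t.ok k d) (force (Nat.succ d) fun d => next d t) 0

/-- Continues the search at all tables that define `S • d`: it is an old coset, a new one that is
fixed by `U`, or a new one that is not. -/
def branch (k d : ℕ) (next : ℕ → CosetTable → ℕ) (t : CosetTable) : ℕ :=
  sumTo t.size (fun e => select (Nat.beq (t.s e) 0) ((t.close d e).visit k d next) 0) +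
    ((t.addLoop.close d (t.size + 1)).visit k d next +
      (t.addTriangle.close d (t.size + 1)).visit k d next)

/-- The sum of the values of all complete tables that extend `t`, in which `S` is defined
on the cosets before `d`. -/
def search (k fuel : ℕ) : ℕ → CosetTable → ℕ :=
  Nat.rec (motive := fun _ => ℕ → CosetTable → ℕ) (fun _ _ => 0) (fun _ ih d t =>
    select (Nat.ble d t.size)
      (select (Nat.beq (t.s d) 0) (t.branch k d ih) (force (Nat.succ d) fun d => ih d t))
      (t.value k)) fuel

/-- The weighted number of subgroups that contain `word k` and no conjugate of an earlier word. -/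
def total (k : ℕ) : ℕ :=
  empty.addLoop.eval (search k 25 1) + empty.addTriangle.eval (search k 25 1)

variable {t : CosetTable} {d e i : ℕ}

/-- The numbers of the cosets of a table. -/
def cosets (t : CosetTable) : Finset ℕ := Finset.Icc 1 t.size

theorem mem_cosets : i ∈ t.cosets ↔ 1 ≤ i ∧ i ≤ t.size := Finset.mem_Icc

theorem ne_zero_of_mem_cosets (hi : i ∈ t.cosets) : i ≠ 0 :=
  Nat.one_le_iff_ne_zero.1 (mem_cosets.1 hi).1

/-- The tables in which `S` is a partial involution and `U` a permutation of order dividing three,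
with weight `n + 3 e₂ + 2 e₃`. -/
structure Valid (t : CosetTable) : Prop where
  mem_of_s_ne_zero {i : ℕ} : t.s i ≠ 0 → i ∈ t.cosets
  s_s {i : ℕ} : t.s i ≠ 0 → t.s (t.s i) = i
  mem_of_u_ne_zero {i : ℕ} : t.u i ≠ 0 → i ∈ t.cosets
  u_mem {i : ℕ} : i ∈ t.cosets → t.u i ∈ t.cosets
  u_u_u {i : ℕ} : i ∈ t.cosets → t.u (t.u (t.u i)) = i
  weight_eq : t.weight = t.size + 3 * (t.cosets.filter fun i => t.s i = i).card +
    2 * (t.cosets.filter fun i => t.u i = i).card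

theorem size_close : (t.close d e).size = t.size := by
  rw [close, select_eq_ite, apply_ite size, ite_self]

theorem cosets_close : (t.close d e).cosets = t.cosets := by rw [cosets, size_close, cosets]

theorem weight_close : (t.close d e).weight = t.weight + if d = e then 3 else 0 := by
  rw [close, select_eq_ite, apply_ite weight]
  simp only [Nat.beq_eq]
  split_ifs <;> rfl

theorem u_close : (t.close d e).u = t.u := by
  funext i
  rw [u, close, select_eq_ite, apply_ite uCode, ite_self, u]

theorem s_close (hd : t.s d = 0) (he : t.s e = 0) (hd' : d < 37) (he' : e < 37) (i : ℕ) :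
    (t.close d e).s i = if i = d then e else if i = e then d else t.s i := by
  have hset := entry_setEntry hd he'
  rw [s, close, select_eq_ite, apply_ite sCode]
  simp only [Nat.beq_eq]
  split_ifs with hde h₁ h₂
  · rw [entry_setEntry hd hd', if_pos h₁, hde]
  · exact absurd (h₂.trans hde.symm) h₁
  · rw [entry_setEntry hd hd', if_neg h₁, s]
  all_goals
    rw [entry_setEntry ((hset e).trans (by rw [if_neg (Ne.symm hde)]; exact he)) hd', hset]
    grind [s]

theorem s_addLoop : t.addLoop.s = t.s := rfl

theorem u_addLoop (hu : t.u (t.size + 1) = 0) (hsize : t.size + 1 < 37) (i : ℕ) :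
    t.addLoop.u i = if i = t.size + 1 then t.size + 1 else t.u i := entry_setEntry hu hsize i

theorem s_addTriangle : t.addTriangle.s = t.s := rfl

theorem u_addTriangle (hu : ∀ i > t.size, t.u i = 0) (hsize : t.size + 3 < 37) (i : ℕ) :
    t.addTriangle.u i = if i = t.size + 3 then t.size + 1 else if i = t.size + 2 then t.size + 3
      else if i = t.size + 1 then t.size + 2 else t.u i := by
  have h₁ := entry_setEntry (hu (t.size + 1) (by omega)) (v := t.size + 2) (by omega)
  have h₂ := entry_setEntry ((h₁ (t.size + 2)).trans
    (by simpa [u] using hu (t.size + 2) (by omega))) (v := t.size + 3) (by omega)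
  have h₃ := entry_setEntry ((h₂ (t.size + 3)).trans
    (by simpa [h₁, u] using hu (t.size + 3) (by omega))) (v := t.size + 1) (by omega)
  rw [u, addTriangle, h₃, h₂, h₁, u]

theorem mem_cosets_addTriangle : i ∈ t.addTriangle.cosets ↔
    i ∈ t.cosets ∨ i = t.size + 1 ∨ i = t.size + 2 ∨ i = t.size + 3 := by
  simp only [mem_cosets, addTriangle]
  omega

namespace Valid

theorem s_mem (ht : t.Valid) (hi : t.s i ≠ 0) : t.s i ∈ t.cosets :=
  ht.mem_of_s_ne_zero fun h => by
    have := mem_cosets.1 (ht.mem_of_s_ne_zero hi)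
    rw [ht.s_s hi] at h
    omega

theorem s_eq_zero (ht : t.Valid) (hi : t.size < i) : t.s i = 0 := by
  by_contra h
  have := mem_cosets.1 (ht.mem_of_s_ne_zero h)
  omega

theorem u_eq_zero (ht : t.Valid) (hi : t.size < i) : t.u i = 0 := by
  by_contra h
  have := mem_cosets.1 (ht.mem_of_u_ne_zero h)
  omega

theorem s_zero (ht : t.Valid) : t.s 0 = 0 := by
  by_contra h
  have := mem_cosets.1 (ht.mem_of_s_ne_zero h)
  omega

theorem u_zero (ht : t.Valid) : t.u 0 = 0 := by
  by_contra h
  have := mem_cosets.1 (ht.mem_of_u_ne_zero h)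
  omega

theorem u_addTriangle_cases (ht : t.Valid) (hsize : t.size + 3 < 37) :
    (∀ i ∈ t.cosets, t.addTriangle.u i = t.u i) ∧ t.addTriangle.u (t.size + 1) = t.size + 2 ∧
      t.addTriangle.u (t.size + 2) = t.size + 3 ∧ t.addTriangle.u (t.size + 3) = t.size + 1 := by
  have hu := u_addTriangle (fun _ => ht.u_eq_zero) hsize
  refine ⟨fun i hi => ?_, ?_, ?_, ?_⟩
  · have := mem_cosets.1 hi
    grind
  all_goals grind

theorem empty : CosetTable.empty.Valid where
  mem_of_s_ne_zero h := (h (entry_zero _)).elim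
  s_s h := (h (entry_zero _)).elim
  mem_of_u_ne_zero h := (h (entry_zero _)).elim
  u_mem h := absurd (mem_cosets.1 h) (by simp [CosetTable.empty]; omega)
  u_u_u h := absurd (mem_cosets.1 h) (by simp [CosetTable.empty]; omega)
  weight_eq := by simp [CosetTable.empty, cosets]

theorem close (ht : t.Valid) (hd : t.s d = 0) (he : t.s e = 0) (hd' : d ∈ t.cosets)
    (he' : e ∈ t.cosets) (hsize : t.size < 37) : (t.close d e).Valid := by
  rw [mem_cosets] at hd' he'
  have hs := s_close hd he (by omega) (by omega)
  have h0 := ht.s_zero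
  constructor <;> simp only [u_close, cosets_close, size_close, weight_close, hs]
  case mem_of_s_ne_zero => grind [ht.mem_of_s_ne_zero, mem_cosets]
  case s_s => grind [ht.s_s]
  case mem_of_u_ne_zero => exact ht.mem_of_u_ne_zero
  case u_mem => exact ht.u_mem
  case u_u_u => exact ht.u_u_u
  case weight_eq =>
    rw [ht.weight_eq]
    rcases eq_or_ne d e with rfl | hde
    · have hins : t.cosets.filter (fun i => (if i = d then d else if i = d then d else t.s i) = i) =
          insert d (t.cosets.filter fun i => t.s i = i) := by
        grind [mem_cosets]
      rw [if_pos rfl, hins, Finset.card_insert_of_notMem (by grind)]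
      ring
    · rw [if_neg hde, add_zero]
      congr 4
      grind

theorem addLoop (ht : t.Valid) (hsize : t.size + 1 < 37) : t.addLoop.Valid := by
  have hu := u_addLoop (ht.u_eq_zero t.size.lt_succ_self) hsize
  have hcosets : t.addLoop.cosets = insert (t.size + 1) t.cosets :=
    (Finset.insert_Icc_right_eq_Icc_add_one (by omega)).symm
  have hnew : t.size + 1 ∉ t.cosets := fun h => absurd (mem_cosets.1 h) (by omega)
  have h0 : t.s (t.size + 1) = 0 := ht.s_eq_zero t.size.lt_succ_self
  constructor <;> simp only [s_addLoop, hu, hcosets]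
  case mem_of_s_ne_zero => exact fun h => Finset.mem_insert_of_mem (ht.mem_of_s_ne_zero h)
  case s_s => exact ht.s_s
  case mem_of_u_ne_zero => grind [ht.mem_of_u_ne_zero]
  case u_mem => grind [ht.u_mem]
  case u_u_u => grind [ht.u_mem, ht.u_u_u]
  case weight_eq =>
    have hs : (insert (t.size + 1) t.cosets).filter (fun i => t.s i = i) =
        t.cosets.filter fun i => t.s i = i := by grind
    have hu' : (insert (t.size + 1) t.cosets).filter
        (fun i => (if i = t.size + 1 then t.size + 1 else t.u i) = i) =
        insert (t.size + 1) (t.cosets.filter fun i => t.u i = i) := by grind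
    rw [hs, hu', Finset.card_insert_of_notMem (by grind)]
    have hw := ht.weight_eq
    simp only [CosetTable.addLoop]
    omega

theorem addTriangle (ht : t.Valid) (hsize : t.size + 3 < 37) : t.addTriangle.Valid := by
  obtain ⟨hold, h₁, h₂, h₃⟩ := ht.u_addTriangle_cases hsize
  have hcosets {i : ℕ} : i ∈ t.addTriangle.cosets ↔ _ := mem_cosets_addTriangle
  have hs (i : ℕ) : t.addTriangle.s i = t.s i := rfl
  have hs₀ : ∀ i > t.size, t.s i = 0 := fun _ => ht.s_eq_zero
  constructor
  case mem_of_s_ne_zero => exact fun h => hcosets.2 (.inl (ht.mem_of_s_ne_zero h))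
  case s_s => exact ht.s_s
  case mem_of_u_ne_zero =>
    grind [ht.mem_of_u_ne_zero, u_addTriangle (fun _ => ht.u_eq_zero) hsize]
  case u_mem =>
    intro i hi
    rcases hcosets.1 hi with hi | rfl | rfl | rfl
    · exact hcosets.2 (.inl ((hold i hi).symm ▸ ht.u_mem hi))
    all_goals simp [h₁, h₂, h₃, hcosets]
  case u_u_u =>
    intro i hi
    rcases hcosets.1 hi with hi | rfl | rfl | rfl
    · rw [hold i hi, hold _ (ht.u_mem hi), hold _ (ht.u_mem (ht.u_mem hi)), ht.u_u_u hi]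
    all_goals simp only [h₁, h₂, h₃]
  case weight_eq =>
    have hs' : t.addTriangle.cosets.filter (fun i => t.addTriangle.s i = i) =
        t.cosets.filter fun i => t.s i = i := by grind
    have hu' : t.addTriangle.cosets.filter (fun i => t.addTriangle.u i = i) =
        t.cosets.filter fun i => t.u i = i := by grind
    have hw := ht.weight_eq
    rw [hs', hu']
    simp only [CosetTable.addTriangle]
    omega

end Valid

end CosetTable

namespace PSL2Z

variable {X : Type*} [MulAction PSL2Z X]

theorem Sp_smul_Sp_smul (x : X) : Sp • Sp • x = x := by
  rw [smul_smul, ← sq, Sp_sq, one_smul]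

theorem U_smul_U_smul_U_smul (x : X) : U • U • U • x = x := by
  rw [smul_smul, smul_smul, ← pow_three', U_pow_three, one_smul]

end PSL2Z

namespace CosetTable

open PSL2Z

variable {t : CosetTable} {d e i k : ℕ}

/-- The tables in which every coset is reached from the base coset through smaller numbers. -/
def Rooted (t : CosetTable) : Prop :=
  ∀ i, 1 ≤ i → i + 1 ≤ t.size → t.s (i + 1) ≠ 0 ∧ t.s (i + 1) ≤ i ∨ t.u i = i + 1

theorem Rooted.close (hr : t.Rooted) (hd : t.s d = 0) (he : t.s e = 0)
    (hd' : d ∈ t.cosets) (he' : e ∈ t.cosets) (hsize : t.size < 37) : (t.close d e).Rooted := by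
  rw [mem_cosets] at hd' he'
  have hs := s_close hd he (by omega) (by omega)
  intro i hi hi'
  rw [size_close] at hi'
  simp only [hs, u_close]
  grind [hr i hi hi']

theorem Rooted.addLoop_close (hr : t.Rooted) (ht : t.Valid) (hd : t.s d = 0) (hd' : d ∈ t.cosets)
    (hsize : t.size + 1 < 37) : (t.addLoop.close d (t.size + 1)).Rooted := by
  rw [mem_cosets] at hd'
  have hs := s_close (t := t.addLoop) hd (ht.s_eq_zero t.size.lt_succ_self) (by omega) hsize
  have hu := u_addLoop (ht.u_eq_zero t.size.lt_succ_self) hsize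
  intro i hi hi'
  rw [size_close] at hi'
  change i + 1 ≤ t.size + 1 at hi'
  simp only [hs, u_close, hu, s_addLoop]
  grind [hr i hi]

theorem Rooted.addTriangle_close (hr : t.Rooted) (ht : t.Valid) (hd : t.s d = 0)
    (hd' : d ∈ t.cosets) (hsize : t.size + 3 < 37) :
    (t.addTriangle.close d (t.size + 1)).Rooted := by
  rw [mem_cosets] at hd'
  have hs := s_close (t := t.addTriangle) hd (ht.s_eq_zero t.size.lt_succ_self) (by omega)
    (by omega)
  have hu := u_addTriangle (fun i => ht.u_eq_zero) hsize
  intro i hi hi'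
  rw [size_close] at hi'
  change i + 1 ≤ t.size + 3 at hi'
  simp only [hs, u_close, hu, s_addTriangle]
  grind [hr i hi]

theorem Rooted.induction (hr : t.Rooted) (ht : t.Valid) {P : ℕ → Prop} (one : P 1)
    (s_step : ∀ i ∈ t.cosets, t.s i ≠ 0 → P i → P (t.s i))
    (u_step : ∀ i ∈ t.cosets, P i → P (t.u i)) : ∀ i ∈ t.cosets, P i := by
  intro i
  induction i using Nat.strong_induction_on with
  | _ i ih =>
    intro hi
    obtain ⟨hi₁, hi₂⟩ := mem_cosets.1 hi
    obtain rfl | ⟨j, hj, rfl⟩ : i = 1 ∨ ∃ j, 1 ≤ j ∧ i = j + 1 := by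
      rcases hi₁.eq_or_lt with h | h
      · exact .inl h.symm
      · exact .inr ⟨i - 1, by omega, by omega⟩
    · exact one
    rcases hr j hj hi₂ with ⟨hne, hle⟩ | hu
    · have hmem := ht.s_mem hne
      have hss := ht.s_s hne
      simpa only [hss] using s_step _ hmem (by omega) (ih _ (by omega) hmem)
    · have hmem : j ∈ t.cosets := mem_cosets.2 ⟨hj, by omega⟩
      exact hu ▸ u_step j hmem (ih j (by omega) hmem)

variable {X : Type*} [MulAction PSL2Z X] {c c' : ℕ → X} {x : X}

/-- The maps from the numbers of a table to a set with an action of `PSL(2,ℤ)` that are equivariant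
as far as the table is defined. -/
structure IsMorphism (t : CosetTable) (c : ℕ → X) : Prop where
  s_smul {i : ℕ} : t.s i ≠ 0 → c (t.s i) = Sp • c i
  u_smul {i : ℕ} : i ∈ t.cosets → c (t.u i) = U • c i

/-- The injective morphisms: the table is a part of the action. -/
structure IsLabelling (t : CosetTable) (c : ℕ → X) : Prop extends IsMorphism t c where
  injOn : Set.InjOn c t.cosets

/-- The table describes the action around the point `x`. -/
def Compat (t : CosetTable) (x : X) : Prop := ∃ c : ℕ → X, t.IsLabelling c ∧ c 1 = x

theorem IsMorphism.eqOn (hr : t.Rooted) (ht : t.Valid) (hc : t.IsMorphism c) (hc' : t.IsMorphism c')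
    (h : c 1 = c' 1) : Set.EqOn c c' t.cosets :=
  hr.induction ht h (fun i _ hi h => by rw [hc.s_smul hi, hc'.s_smul hi, h])
    fun i hi h => by rw [hc.u_smul hi, hc'.u_smul hi, h]

theorem IsLabelling.congr (ht : t.Valid) (hc : t.IsLabelling c) (h : Set.EqOn c c' t.cosets) :
    t.IsLabelling c' where
  s_smul hi := by rw [← h (ht.s_mem hi), ← h (ht.mem_of_s_ne_zero hi), hc.s_smul hi]
  u_smul hi := by rw [← h (ht.u_mem hi), ← h hi, hc.u_smul hi]
  injOn := hc.injOn.congr h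

theorem isLabelling_close (hd : t.s d = 0) (he : t.s e = 0) (he₀ : e ≠ 0) (hd' : d < 37)
    (he' : e < 37) :
    (t.close d e).IsLabelling c ↔ t.IsLabelling c ∧ c e = Sp • c d := by
  have hs := s_close hd he hd' he'
  refine ⟨fun h => ⟨⟨⟨fun {i} hi => ?_, fun hi => ?_⟩, ?_⟩, ?_⟩, fun ⟨h, hde⟩ =>
    ⟨⟨fun {i} hi => ?_, fun {i} hi => ?_⟩, ?_⟩⟩
  · have h' : (t.close d e).s i = t.s i := by grind
    exact h' ▸ h.s_smul (by rwa [h'])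
  · simpa only [u_close] using h.u_smul (cosets_close.symm ▸ hi)
  · exact cosets_close ▸ h.injOn
  · have h' : (t.close d e).s d = e := by simp [hs]
    exact h' ▸ h.s_smul (by rwa [h'])
  · rw [hs] at hi ⊢
    split_ifs at hi ⊢ with h₁ h₂
    · rw [h₁, hde]
    · rw [h₂, hde, Sp_smul_Sp_smul]
    · exact h.s_smul hi
  · rw [u_close]
    exact h.u_smul (by rwa [cosets_close] at hi)
  · exact cosets_close.symm ▸ h.injOn

theorem IsMorphism.U_smul_mem_image (ht : t.Valid) (hc : t.IsMorphism c) (hx : x ∈ c '' t.cosets) :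
    U • x ∈ c '' t.cosets := by
  obtain ⟨i, hi, rfl⟩ := hx
  exact ⟨t.u i, ht.u_mem hi, hc.u_smul hi⟩

theorem isLabelling_addLoop (ht : t.Valid) (hsize : t.size + 1 < 37) :
    t.addLoop.IsLabelling c ↔ t.IsLabelling c ∧ c (t.size + 1) ∉ c '' t.cosets ∧
      U • c (t.size + 1) = c (t.size + 1) := by
  have hu := u_addLoop (ht.u_eq_zero t.size.lt_succ_self) hsize
  have hnew : t.size + 1 ∉ (t.cosets : Set ℕ) := fun h => absurd (mem_cosets.1 h) (by omega)
  have hcosets : (t.addLoop.cosets : Set ℕ) = insert (t.size + 1) ↑t.cosets := by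
    rw [← Finset.coe_insert, cosets, cosets, Finset.insert_Icc_right_eq_Icc_add_one (by omega)]
    rfl
  have hmem {i : ℕ} : i ∈ t.addLoop.cosets ↔ i = t.size + 1 ∨ i ∈ t.cosets := by
    rw [← Finset.mem_coe, hcosets, Set.mem_insert_iff, Finset.mem_coe]
  have hold {i : ℕ} (hi : i ∈ t.cosets) : t.addLoop.u i = t.u i := by grind
  have h₁ : t.addLoop.u (t.size + 1) = t.size + 1 := by grind
  constructor
  · intro h
    obtain ⟨hinj, himage⟩ := (Set.injOn_insert hnew).1 (hcosets ▸ h.injOn)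
    refine ⟨⟨⟨h.s_smul, fun {i} hi => ?_⟩, hinj⟩, himage, ?_⟩
    · exact hold hi ▸ h.u_smul (hmem.2 (.inr hi))
    · rw [← h.u_smul (hmem.2 (.inl rfl)), h₁]
  · rintro ⟨h, himage, hloop⟩
    refine ⟨⟨h.s_smul, fun {i} hi => ?_⟩, hcosets ▸ (Set.injOn_insert hnew).2 ⟨h.injOn, himage⟩⟩
    rcases hmem.1 hi with rfl | hi
    · rw [h₁, hloop]
    · rw [hold hi, h.u_smul hi]

theorem IsLabelling.of_addTriangle (ht : t.Valid) (hsize : t.size + 3 < 37)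
    (h : t.addTriangle.IsLabelling c) :
    t.IsLabelling c ∧ c (t.size + 1) ∉ c '' t.cosets ∧ U • c (t.size + 1) ≠ c (t.size + 1) := by
  obtain ⟨hold, h₁, -, -⟩ := ht.u_addTriangle_cases hsize
  have hsub {i : ℕ} (hi : i ∈ t.cosets) : i ∈ t.addTriangle.cosets :=
    mem_cosets_addTriangle.2 (.inl hi)
  have hn₁ : t.size + 1 ∈ t.addTriangle.cosets := mem_cosets_addTriangle.2 (by simp)
  have hn₂ : t.size + 2 ∈ t.addTriangle.cosets := mem_cosets_addTriangle.2 (by simp)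
  refine ⟨⟨⟨h.s_smul, fun {i} hi => ?_⟩, h.injOn.mono fun _ => hsub⟩, ?_, ?_⟩
  · exact hold i hi ▸ h.u_smul (hsub hi)
  · rintro ⟨i, hi, hic⟩
    have := mem_cosets.1 hi
    have := h.injOn (hsub hi) hn₁ hic
    omega
  · rw [← h.u_smul hn₁, h₁]
    exact h.injOn.ne hn₂ hn₁ (by omega)

theorem IsLabelling.addTriangle (ht : t.Valid) (hsize : t.size + 3 < 37) (h : t.IsLabelling c)
    (himage : c (t.size + 1) ∉ c '' t.cosets) (hne : U • c (t.size + 1) ≠ c (t.size + 1))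
    (hc₂ : c (t.size + 2) = U • c (t.size + 1)) (hc₃ : c (t.size + 3) = U • c (t.size + 2)) :
    t.addTriangle.IsLabelling c := by
  obtain ⟨hold, h₁, h₂, h₃⟩ := ht.u_addTriangle_cases hsize
  have h3 := U_smul_U_smul_U_smul (c (t.size + 1))
  have hnew {i : ℕ} (hi : t.size < i) : i ∉ (t.cosets : Set ℕ) := fun h => by
    have := mem_cosets.1 h
    omega
  have hcosets : (t.addTriangle.cosets : Set ℕ) =
      insert (t.size + 3) (insert (t.size + 2) (insert (t.size + 1) ↑t.cosets)) := by
    ext i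
    simp only [Finset.mem_coe, mem_cosets_addTriangle, Set.mem_insert_iff]
    tauto
  refine ⟨⟨h.s_smul, fun {i} hi => ?_⟩, ?_⟩
  · rcases mem_cosets_addTriangle.1 hi with hi | rfl | rfl | rfl
    · rw [hold i hi, h.u_smul hi]
    · rw [h₁, hc₂]
    · rw [h₂, hc₃]
    · rw [h₃, hc₃, hc₂, h3]
  · have hU {x : X} (hx : x ∈ c '' t.cosets) : U • x ∈ c '' t.cosets := h.U_smul_mem_image ht hx
    have hne' : U • U • c (t.size + 1) ≠ c (t.size + 1) := fun h' => hne (by rwa [h'] at h3)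
    rw [hcosets, Set.injOn_insert, Set.injOn_insert, Set.injOn_insert (hnew (by omega))]
    · simp only [Set.image_insert_eq, hc₃, hc₂]
      refine ⟨⟨⟨h.injOn, himage⟩, ?_⟩, ?_⟩
      · rintro (h' | h')
        · exact hne h'
        · exact himage (h3 ▸ hU (hU h'))
      · rintro (h' | h' | h')
        · exact hne (smul_left_cancel U h')
        · exact hne' h'
        · exact himage (h3 ▸ hU h')
    · simp [hnew]
    · simp [hnew]

end CosetTable

namespace CosetTable

open PSL2Z

variable {t : CosetTable} {d e i k : ℕ} {X : Type*} [MulAction PSL2Z X] {c : ℕ → X} {x : X}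

theorem Compat.of_close (hd : t.s d = 0) (he : t.s e = 0) (he₀ : e ≠ 0) (hd' : d < 37)
    (he' : e < 37) (h : (t.close d e).Compat x) : t.Compat x := by
  obtain ⟨c, hc, hx⟩ := h
  exact ⟨c, ((isLabelling_close hd he he₀ hd' he').1 hc).1, hx⟩

theorem compat_close_iff (ht : t.Valid) (hr : t.Rooted) (hc : t.IsLabelling c) (hd : t.s d = 0)
    (he : t.s e = 0) (hd' : d ∈ t.cosets) (he' : e ∈ t.cosets) (hsize : t.size < 37) :
    (t.close d e).Compat (c 1) ↔ c e = Sp • c d := by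
  have hd₁ := mem_cosets.1 hd'
  have he₁ := mem_cosets.1 he'
  have hiff (c : ℕ → X) := isLabelling_close (c := c) hd he (by omega) (by omega) (by omega)
  constructor
  · rintro ⟨c', hc', hx⟩
    obtain ⟨hc', hde⟩ := (hiff c').1 hc'
    have heq := hc'.eqOn hr ht hc.toIsMorphism hx
    rw [← heq hd', ← heq he', hde]
  · exact fun hde => ⟨c, (hiff c).2 ⟨hc, hde⟩, rfl⟩

theorem compat_addLoop_close_iff (ht : t.Valid) (hr : t.Rooted) (hc : t.IsLabelling c)
    (hd : t.s d = 0) (hd' : d ∈ t.cosets) (hsize : t.size + 1 < 37) :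
    (t.addLoop.close d (t.size + 1)).Compat (c 1) ↔
      Sp • c d ∉ c '' t.cosets ∧ U • Sp • c d = Sp • c d := by
  have hd₁ := mem_cosets.1 hd'
  have hiff (c : ℕ → X) : (t.addLoop.close d (t.size + 1)).IsLabelling c ↔ _ :=
    isLabelling_close hd (ht.s_eq_zero t.size.lt_succ_self) (by omega) (by omega) hsize
  constructor
  · rintro ⟨c', hc', hx⟩
    obtain ⟨hc', hde⟩ := (hiff c').1 hc'
    obtain ⟨hc', himage, hloop⟩ := (isLabelling_addLoop ht hsize).1 hc'
    have heq := hc'.eqOn hr ht hc.toIsMorphism hx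
    rw [← heq hd', ← heq.image_eq, ← hde]
    exact ⟨himage, hloop⟩
  · rintro ⟨himage, hloop⟩
    let c' := Function.update c (t.size + 1) (Sp • c d)
    have hnew : c' (t.size + 1) = Sp • c d := Function.update_self ..
    have heq {i : ℕ} (hi : i < t.size + 1) : c' i = c i := Function.update_of_ne hi.ne ..
    have hon : Set.EqOn c c' t.cosets := fun i hi =>
      (heq (Nat.lt_succ_of_le (mem_cosets.1 hi).2)).symm
    refine ⟨c', (hiff c').2 ⟨(isLabelling_addLoop ht hsize).2 ⟨hc.congr ht hon, ?_⟩, ?_⟩, heq ?_⟩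
    · rw [hnew, ← hon.image_eq]
      exact ⟨himage, hloop⟩
    · rw [hnew, heq (by omega)]
    · omega

theorem compat_addTriangle_close_iff (ht : t.Valid) (hr : t.Rooted) (hc : t.IsLabelling c)
    (hd : t.s d = 0) (hd' : d ∈ t.cosets) (hsize : t.size + 3 < 37) :
    (t.addTriangle.close d (t.size + 1)).Compat (c 1) ↔
      Sp • c d ∉ c '' t.cosets ∧ U • Sp • c d ≠ Sp • c d := by
  have hd₁ := mem_cosets.1 hd'
  have hiff (c : ℕ → X) : (t.addTriangle.close d (t.size + 1)).IsLabelling c ↔ _ :=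
    isLabelling_close hd (ht.s_eq_zero t.size.lt_succ_self) (by omega) (by omega) (by omega)
  constructor
  · rintro ⟨c', hc', hx⟩
    obtain ⟨hc', hde⟩ := (hiff c').1 hc'
    obtain ⟨hc', himage, hne⟩ := hc'.of_addTriangle ht hsize
    have heq := hc'.eqOn hr ht hc.toIsMorphism hx
    rw [← heq hd', ← heq.image_eq, ← hde]
    exact ⟨himage, hne⟩
  · rintro ⟨himage, hne⟩
    let c' := fun i => if i ≤ t.size then c i else if i = t.size + 1 then Sp • c d else
      if i = t.size + 2 then U • Sp • c d else U • U • Sp • c d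
    have h₁ : c' (t.size + 1) = Sp • c d := by simp [c']
    have h₂ : c' (t.size + 2) = U • Sp • c d := by simp [c']
    have h₃ : c' (t.size + 3) = U • U • Sp • c d := by simp [c']
    have heq {i : ℕ} (hi : i ≤ t.size) : c' i = c i := if_pos hi
    have hon : Set.EqOn c c' t.cosets := fun i hi => (heq (mem_cosets.1 hi).2).symm
    refine ⟨c', (hiff c').2 ⟨(hc.congr ht hon).addTriangle ht hsize ?_ ?_ ?_ ?_, ?_⟩, heq ?_⟩
    · rwa [h₁, ← hon.image_eq]
    · rwa [h₁]
    · rw [h₁, h₂]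
    · rw [h₂, h₃]
    · rw [h₁, heq hd₁.2]
    · omega

theorem compat_of_branch (ht : t.Valid) (hd : t.s d = 0) (hd' : d ∈ t.cosets)
    (hsize : t.size + 3 < 37) :
    (∀ e ∈ t.cosets, t.s e = 0 → (t.close d e).Compat x → t.Compat x) ∧
      ((t.addLoop.close d (t.size + 1)).Compat x → t.Compat x) ∧
      ((t.addTriangle.close d (t.size + 1)).Compat x → t.Compat x) := by
  have hd₁ := mem_cosets.1 hd'
  have h₀ : t.s (t.size + 1) = 0 := ht.s_eq_zero t.size.lt_succ_self
  refine ⟨fun e he he₀ h => ?_, fun h => ?_, fun h => ?_⟩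
  · have he₁ := mem_cosets.1 he
    exact h.of_close hd he₀ (by omega) (by omega) (by omega)
  · obtain ⟨c, hc, hx⟩ := Compat.of_close (t := t.addLoop) hd h₀ (by omega) (by omega) (by omega) h
    exact ⟨c, ((isLabelling_addLoop ht (by omega)).1 hc).1, hx⟩
  · obtain ⟨c, hc, hx⟩ := Compat.of_close (t := t.addTriangle) hd h₀ (by omega) (by omega)
      (by omega) h
    exact ⟨c, (hc.of_addTriangle ht hsize).1, hx⟩

theorem IsLabelling.s_eq_zero_of_apply_eq (ht : t.Valid) (hc : t.IsLabelling c) (hd : t.s d = 0)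
    (hd' : d ∈ t.cosets) (he : e ∈ t.cosets) (hed : c e = Sp • c d) : t.s e = 0 := by
  by_contra h
  have hsd : t.s e = d := hc.injOn (ht.s_mem h) hd' <| by rw [hc.s_smul h, hed, Sp_smul_Sp_smul]
  exact ne_zero_of_mem_cosets he (by rw [← ht.s_s h, hsd, hd])

open scoped Classical in
theorem ite_compat_eq_sum_branch (ht : t.Valid) (hr : t.Rooted) (hd : t.s d = 0)
    (hd' : d ∈ t.cosets) (hsize : t.size + 3 < 37) (w : ℝ≥0∞) :
    (if t.Compat x then w else 0) =
      ∑ e ∈ t.cosets with t.s e = 0, (if (t.close d e).Compat x then w else 0) +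
        ((if (t.addLoop.close d (t.size + 1)).Compat x then w else 0) +
          if (t.addTriangle.close d (t.size + 1)).Compat x then w else 0) := by
  by_cases hx : t.Compat x
  · obtain ⟨c, hc, rfl⟩ := hx
    have hclose : ∀ e ∈ t.cosets.filter (t.s · = 0),
        (if (t.close d e).Compat (c 1) then w else 0) = if c e = Sp • c d then w else 0 := by
      intro e he
      obtain ⟨he, he₀⟩ := Finset.mem_filter.1 he
      simp only [compat_close_iff ht hr hc hd he₀ hd' he (by omega)]
    rw [if_pos ⟨c, hc, rfl⟩, Finset.sum_congr rfl hclose]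
    simp only [compat_addLoop_close_iff ht hr hc hd hd' (by omega),
      compat_addTriangle_close_iff ht hr hc hd hd' hsize]
    by_cases himage : Sp • c d ∈ c '' t.cosets
    · rcases id himage with ⟨e, he, hed⟩
      have he₀ := hc.s_eq_zero_of_apply_eq ht hd hd' he hed
      rw [Finset.sum_eq_single_of_mem e (Finset.mem_filter.2 ⟨he, he₀⟩)]
      · simp [himage, hed]
      · intro e' he' hne
        exact if_neg fun h => hne (hc.injOn (Finset.mem_filter.1 he').1 he (h.trans hed.symm))
    · rw [Finset.sum_eq_zero fun e he => if_neg fun h =>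
        himage ⟨e, (Finset.mem_filter.1 he).1, h⟩]
      by_cases hU : U • Sp • c d = Sp • c d <;> simp [himage, hU]
  · obtain ⟨hclose, hloop, htriangle⟩ := compat_of_branch (x := x) ht hd hd' hsize
    rw [if_neg hx, if_neg (mt hloop hx), if_neg (mt htriangle hx), Finset.sum_eq_zero]
    · simp
    · intro e he
      obtain ⟨he, he₀⟩ := Finset.mem_filter.1 he
      exact if_neg (mt (hclose e he he₀) hx)

open scoped Classical in
/-- The sum of `f Γ` over all subgroups `Γ` whose action on the cosets `t` describes around the base
coset, each `Γ` taken as often as there are points with stabilizer `Γ` in its action. -/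
noncomputable def mass (f : Subgroup PSL2Z → ℝ≥0∞) (t : CosetTable) : ℝ≥0∞ :=
  ∑' Γ : Subgroup PSL2Z, if t.Compat ((1 : PSL2Z) : PSL2Z ⧸ Γ) then selfStabilized Γ * f Γ else 0

theorem mass_eq_sum_branch (f : Subgroup PSL2Z → ℝ≥0∞) (ht : t.Valid) (hr : t.Rooted)
    (hd : t.s d = 0) (hd' : d ∈ t.cosets) (hsize : t.size + 3 < 37) :
    mass f t = ∑ e ∈ t.cosets with t.s e = 0, mass f (t.close d e) +
      (mass f (t.addLoop.close d (t.size + 1)) + mass f (t.addTriangle.close d (t.size + 1))) := by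
  simp only [mass]
  rw [← Summable.tsum_finsetSum fun _ _ => ENNReal.summable, ← ENNReal.tsum_add,
    ← ENNReal.tsum_add]
  exact tsum_congr fun Γ => ite_compat_eq_sum_branch ht hr hd hd' hsize _

end CosetTable

namespace CosetTable

open PSL2Z

variable {t : CosetTable} {d e i k : ℕ} {X : Type*} [MulAction PSL2Z X] {c : ℕ → X}
  {Γ : Subgroup PSL2Z} {γ : ℕ → PSL2Z ⧸ Γ}

theorem act_add_two (t : CosetTable) (k : ℕ) : t.act (k + 2) = (t.s ∘ t.u)^[k + 1] :=
  iter_eq_iterate (fun i => t.s (t.u i)) (k + 1)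

theorem IsMorphism.act_smul (ht : t.Valid) (hc : t.IsMorphism c) (hi : i ∈ t.cosets)
    (hne : t.act k i ≠ 0) : t.act k i ∈ t.cosets ∧ c (t.act k i) = word k • c i := by
  match k with
  | 0 => exact ⟨ht.s_mem hne, hc.s_smul hne⟩
  | 1 => exact ⟨ht.u_mem hi, hc.u_smul hi⟩
  | k + 2 =>
    rw [act_add_two] at hne ⊢
    suffices ∀ n, (t.s ∘ t.u)^[n] i ≠ 0 →
        (t.s ∘ t.u)^[n] i ∈ t.cosets ∧ c ((t.s ∘ t.u)^[n] i) = Tp ^ n • c i from this _ hne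
    intro n
    induction n with
    | zero => simpa using fun _ => hi
    | succ n ih =>
      rw [Function.iterate_succ_apply', Function.comp_apply]
      generalize (t.s ∘ t.u)^[n] i = j at ih
      intro hs
      have hj : j ≠ 0 := fun h => hs (by rw [h, ht.u_zero, ht.s_zero])
      obtain ⟨hmem, hcj⟩ := ih hj
      refine ⟨ht.s_mem hs, ?_⟩
      rw [hc.s_smul hs, hc.u_smul hmem, hcj, smul_smul, smul_smul, Sp_mul_U, ← pow_succ']

theorem avoids_iff : t.avoids k i = true ↔ ∀ j < k, t.act j i ≠ i := by
  induction k with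
  | zero => simp [avoids]
  | succ k ih =>
    have h : t.avoids (k + 1) i = select (Nat.beq (t.act k i) i) false (t.avoids k i) := rfl
    simp [h, select_eq_ite, ih, Nat.le_iff_lt_or_eq, or_imp, forall_and,
      and_comm]

theorem ok_iff : t.ok k d = true ↔
    t.weight ≤ 24 ∧ t.avoids k d = true ∧ t.avoids k (t.s d) = true ∧ t.act k 1 ≤ 1 := by
  simp [ok, select_eq_ite]

/-- The subgroups that contain `word k` and no conjugate of an earlier word. -/
def HasRootType (k : ℕ) (Γ : Subgroup PSL2Z) : Prop :=
  word k ∈ Γ ∧ ∀ j < k, nFix (word j) Γ = 0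

theorem nFix_eq_ncard (g : PSL2Z) (Γ : Subgroup PSL2Z) :
    nFix g Γ = (MulAction.fixedBy (PSL2Z ⧸ Γ) g).ncard := Nat.card_coe_set_eq _

theorem IsMorphism.smul_eq_of_act_eq (ht : t.Valid) (hc : t.IsMorphism c) (hi : i ∈ t.cosets)
    (hact : t.act k i = i) : word k • c i = c i := by
  have hne : t.act k i ≠ 0 := hact.trans_ne (ne_zero_of_mem_cosets hi)
  rw [← (hc.act_smul ht hi hne).2, hact]

theorem IsLabelling.card_filter_act_eq_le (hΓ : Γ.index ≠ 0) (ht : t.Valid) (hγ : t.IsLabelling γ)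
    (k : ℕ) : (t.cosets.filter fun i => t.act k i = i).card ≤ nFix (word k) Γ := by
  have : Γ.FiniteIndex := ⟨hΓ⟩
  rw [nFix_eq_ncard, ← Set.ncard_coe_finset, ← Set.InjOn.ncard_image
    (hγ.injOn.mono (Finset.coe_subset.2 (Finset.filter_subset ..)))]
  refine Set.ncard_le_ncard ?_
  rintro _ ⟨i, hi, rfl⟩
  obtain ⟨hi, hact⟩ := Finset.mem_filter.1 hi
  exact hγ.smul_eq_of_act_eq ht hi hact

theorem IsLabelling.size_le_index (hΓ : Γ.index ≠ 0) (hγ : t.IsLabelling γ) :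
    t.size ≤ Γ.index := by
  have : Γ.FiniteIndex := ⟨hΓ⟩
  have hcard := Set.ncard_le_ncard (Set.subset_univ (γ '' t.cosets))
  rwa [hγ.injOn.ncard_image, Set.ncard_coe_finset, cosets, Nat.card_Icc, Set.ncard_univ,
    Nat.add_sub_cancel] at hcard

theorem IsLabelling.weight_le_tfIdx (hΓ : Γ.index ≠ 0) (ht : t.Valid) (hγ : t.IsLabelling γ) :
    t.weight ≤ tfIdx Γ := by
  have hs : (t.cosets.filter fun i => t.s i = i).card ≤ nFix Sp Γ :=
    hγ.card_filter_act_eq_le hΓ ht 0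
  have hu : (t.cosets.filter fun i => t.u i = i).card ≤ nFix (Sp * Tp) Γ :=
    hγ.card_filter_act_eq_le hΓ ht 1
  have hsize := hγ.size_le_index hΓ
  rw [ht.weight_eq, tfIdx]
  omega

theorem IsLabelling.avoids (hΓ : Γ.index ≠ 0) (ht : t.Valid) (hγ : t.IsLabelling γ)
    (hk : ∀ j < k, nFix (word j) Γ = 0) (hi : i ∈ t.cosets) : t.avoids k i = true := by
  have : Γ.FiniteIndex := ⟨hΓ⟩
  refine avoids_iff.2 fun j hj hact => ?_
  exact (Finite.card_eq_zero_iff.1 (hk j hj)).false ⟨γ i, hγ.smul_eq_of_act_eq ht hi hact⟩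

theorem ok_of_compat (hcounted : Counted Γ) (hroot : HasRootType k Γ) (ht : t.Valid)
    (hcompat : t.Compat ((1 : PSL2Z) : PSL2Z ⧸ Γ)) (hd : t.s d ≠ 0) : t.ok k d = true := by
  obtain ⟨hΓ, -, htf⟩ := hcounted
  obtain ⟨γ, hγ, hγ₁⟩ := hcompat
  have hd' := ht.mem_of_s_ne_zero hd
  have h₁ : 1 ∈ t.cosets := by
    have := mem_cosets.1 hd'
    exact mem_cosets.2 ⟨le_rfl, by omega⟩
  refine ok_iff.2 ⟨htf ▸ hγ.weight_le_tfIdx hΓ ht, hγ.avoids hΓ ht hroot.2 hd',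
    hγ.avoids hΓ ht hroot.2 (ht.s_mem hd), ?_⟩
  by_contra! hact
  obtain ⟨hmem, hsmul⟩ := hγ.act_smul ht h₁ (by omega : t.act k 1 ≠ 0)
  have hfix : word k • ((1 : PSL2Z) : PSL2Z ⧸ Γ) = (1 : PSL2Z) := by
    rw [← MulAction.mem_stabilizer_iff, MulAction.stabilizer_quotient]
    exact hroot.1
  rw [hγ₁, hfix, ← hγ₁] at hsmul
  exact hact.ne' (hγ.injOn hmem h₁ hsmul)

open scoped Classical in
/-- The weight with which the search with root word `word k` counts a subgroup. The number `24!`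
makes it an integer. -/
noncomputable def share (k : ℕ) (Γ : Subgroup PSL2Z) : ℝ≥0∞ :=
  if Counted Γ ∧ HasRootType k Γ then
    ((Nat.factorial 24 / nFix (word k) Γ : ℕ) : ℝ≥0∞) else 0

theorem mass_share_eq_zero_of_not_ok (ht : t.Valid) (hd : t.s d ≠ 0) (hok : t.ok k d = false) :
    mass (share k) t = 0 := by
  refine ENNReal.tsum_eq_zero.2 fun Γ => ?_
  split_ifs with hcompat
  · refine mul_eq_zero_of_right _ (if_neg fun h => ?_)
    simp [ok_of_compat h.1 h.2 ht hcompat hd] at hok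
  · rfl

end CosetTable

namespace CosetTable

open PSL2Z

/-- The tables of a whole finite action. -/
structure Complete (t : CosetTable) : Prop where
  valid : t.Valid
  rooted : t.Rooted
  one_le_size : 1 ≤ t.size
  s_ne_zero {i : ℕ} : i ∈ t.cosets → t.s i ≠ 0

namespace Complete

variable {t : CosetTable} {k : ℕ}

/-- The cosets of a complete table, as a type on which `PSL(2,ℤ)` acts. -/
@[ext]
structure Coset (_ : t.Complete) where
  val : ℕ
  mem : val ∈ t.cosets

variable (h : t.Complete)

/-- The cosets as a subset of the numbers. -/
def cosetEquiv : h.Coset ≃ t.cosets where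
  toFun i := ⟨i.val, i.mem⟩
  invFun i := ⟨i.1, i.2⟩

instance : Finite h.Coset := .of_equiv _ h.cosetEquiv.symm

instance : LinearOrder h.Coset := LinearOrder.lift' Coset.val fun _ _ => Coset.ext

/-- The base coset. -/
def base : h.Coset := ⟨1, mem_cosets.2 ⟨le_rfl, h.one_le_size⟩⟩

/-- The permutation by which `S` acts. -/
def sPerm : Equiv.Perm h.Coset :=
  Function.Involutive.toPerm (fun i => ⟨t.s i.val, h.valid.s_mem (h.s_ne_zero i.mem)⟩)
    fun i => Coset.ext (h.valid.s_s (h.s_ne_zero i.mem))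

/-- The permutation by which `U` acts. -/
def uPerm : Equiv.Perm h.Coset where
  toFun i := ⟨t.u i.val, h.valid.u_mem i.mem⟩
  invFun i := ⟨t.u (t.u i.val), h.valid.u_mem (h.valid.u_mem i.mem)⟩
  left_inv i := Coset.ext (h.valid.u_u_u i.mem)
  right_inv i := Coset.ext (h.valid.u_u_u i.mem)

theorem exists_hom : ∃ f : PSL2Z →* Equiv.Perm h.Coset, f Sp = h.sPerm ∧ f U = h.uPerm :=
  exists_monoidHom (Equiv.ext fun i => Coset.ext (h.valid.s_s (h.s_ne_zero i.mem)))
    (Equiv.ext fun i => Coset.ext (h.valid.u_u_u i.mem))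

noncomputable instance : MulAction PSL2Z h.Coset := MulAction.compHom _ h.exists_hom.choose

variable {h}

theorem val_Sp_smul (i : h.Coset) : (Sp • i).val = t.s i.val :=
  congrArg Coset.val (Equiv.congr_fun h.exists_hom.choose_spec.1 i)

theorem val_U_smul (i : h.Coset) : (U • i).val = t.u i.val :=
  congrArg Coset.val (Equiv.congr_fun h.exists_hom.choose_spec.2 i)

theorem val_pow_Tp_smul (n : ℕ) (i : h.Coset) : (Tp ^ n • i).val = (t.s ∘ t.u)^[n] i.val := by
  have hsemiconj : Function.Semiconj Coset.val (fun i : h.Coset => Tp • i) (t.s ∘ t.u) :=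
    fun i => by
      change (Tp • i).val = t.s (t.u i.val)
      rw [← Sp_mul_U, mul_smul, val_Sp_smul, val_U_smul]
  rw [← (hsemiconj.iterate_right n) i, smul_iterate]

theorem val_word_smul (i : h.Coset) : (word k • i).val = t.act k i.val := by
  match k with
  | 0 => exact val_Sp_smul i
  | 1 => exact val_U_smul i
  | k + 2 => rw [act_add_two]; exact val_pow_Tp_smul (k + 1) i

instance : MulAction.IsPretransitive PSL2Z h.Coset := by
  refine (MulAction.isPretransitive_iff_base h.base).2 fun i => ?_
  refine h.rooted.induction h.valid (P := fun i => ∀ hi, ∃ g : PSL2Z, g • h.base = ⟨i, hi⟩)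
    (fun _ => ⟨1, one_smul ..⟩) (fun i hi _ ih hs => ?_) (fun i hi ih hu => ?_) i.val i.mem i.mem
  · obtain ⟨g, hg⟩ := ih hi
    exact ⟨Sp * g, by rw [mul_smul, hg]; exact Coset.ext (val_Sp_smul _)⟩
  · obtain ⟨g, hg⟩ := ih hi
    exact ⟨U * g, by rw [mul_smul, hg]; exact Coset.ext (val_U_smul _)⟩

theorem card_subtype_coset (p : ℕ → Prop) [DecidablePred p] :
    Nat.card {i : h.Coset // p i.val} = (t.cosets.filter p).card :=
  (Nat.card_congr ((h.cosetEquiv.subtypeEquiv fun _ => Iff.rfl).trans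
    (Equiv.subtypeSubtypeEquivSubtypeInter (· ∈ t.cosets) p))).trans
    (Nat.subtype_card _ fun _ => Finset.mem_filter)

variable (h) in
/-- The subgroup with the complete table `t`. -/
noncomputable def subgroup : Subgroup PSL2Z := MulAction.stabilizer PSL2Z h.base

theorem apply_smul {X : Type*} [MulAction PSL2Z X] {c : ℕ → X} (hc : t.IsMorphism c) (g : PSL2Z)
    (i : h.Coset) : c (g • i).val = g • c i.val := by
  induction g using induction_Sp_U with
  | one => rw [one_smul, one_smul]
  | Sp_mul g ih => rw [mul_smul, val_Sp_smul, hc.s_smul (h.s_ne_zero (g • i).mem), ih, mul_smul]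
  | U_mul g ih => rw [mul_smul, val_U_smul, hc.u_smul (g • i).mem, ih, mul_smul]

theorem compat_iff_eq_subgroup {Γ : Subgroup PSL2Z} :
    t.Compat ((1 : PSL2Z) : PSL2Z ⧸ Γ) ↔ Γ = h.subgroup := by
  constructor
  · rintro ⟨c, hc, hc₁⟩
    rw [← MulAction.stabilizer_quotient Γ, ← hc₁, subgroup]
    ext g
    have hsmul : c (g • h.base).val = g • c 1 := apply_smul hc.toIsMorphism g h.base
    rw [MulAction.mem_stabilizer_iff, MulAction.mem_stabilizer_iff, ← hsmul, Coset.ext_iff]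
    exact hc.injOn.eq_iff (g • h.base).mem h.base.mem
  · rintro rfl
    obtain ⟨e, he₁, he⟩ : ∃ e : PSL2Z ⧸ h.subgroup ≃ h.Coset, e (1 : PSL2Z) = h.base ∧
      ∀ (g : PSL2Z) (y : PSL2Z ⧸ h.subgroup), e (g • y) = g • e y := exists_equivariant_equiv h.base
    have he' (g : PSL2Z) (i : h.Coset) : e.symm (g • i) = g • e.symm i := by
      rw [e.symm_apply_eq, he, e.apply_symm_apply]
    let c : ℕ → PSL2Z ⧸ h.subgroup := Function.extend Coset.val e.symm fun _ => (1 : PSL2Z)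
    have hc (i : h.Coset) : c i.val = e.symm i :=
      Function.Injective.extend_apply (fun _ _ => Coset.ext) _ _ i
    refine ⟨c, ⟨⟨fun {i} hi => ?_, fun {i} hi => ?_⟩, fun i hi j hj hij => ?_⟩, ?_⟩
    · obtain ⟨i, rfl⟩ : ∃ i' : h.Coset, i'.val = i := ⟨⟨i, h.valid.mem_of_s_ne_zero hi⟩, rfl⟩
      rw [← val_Sp_smul, hc, he', hc]
    · obtain ⟨i, rfl⟩ : ∃ i' : h.Coset, i'.val = i := ⟨⟨i, hi⟩, rfl⟩
      rw [← val_U_smul, hc, he', hc]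
    · exact congrArg Coset.val (e.symm.injective <|
        (hc ⟨i, hi⟩).symm.trans (hij.trans (hc ⟨j, hj⟩)))
    · exact (hc h.base).trans (e.symm_apply_eq.2 he₁.symm)

end Complete

end CosetTable

namespace CosetTable

open PSL2Z

theorem isLeast_iff {f : ℕ → ℕ} {i fuel x : ℕ} : isLeast f i fuel x = true ↔
    ∀ n < fuel, (∀ l < n, i < f^[l + 1] x) → i ≤ f^[n + 1] x := by
  induction fuel generalizing x with
  | zero => simp [isLeast]
  | succ fuel ih =>
    have hstep : isLeast f i (fuel + 1) x = force (f x) fun y =>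
      select (Nat.ble y i) (Nat.beq y i) (isLeast f i fuel y) := rfl
    rw [hstep, force_eq, select_eq_ite, Nat.forall_lt_succ_left]
    simp only [Nat.ble_eq, Nat.forall_lt_succ_left, Function.iterate_succ_apply,
      Function.iterate_zero_apply, Nat.not_lt_zero, IsEmpty.forall_iff, implies_true,
      forall_const] at ih ⊢
    split_ifs with hle
    · rw [Nat.beq_eq]
      exact ⟨fun h => ⟨h.ge, fun n _ h' => absurd h'.1 h.not_gt⟩, fun h => hle.antisymm h.1⟩
    · have hlt := not_le.1 hle
      simp only [ih, hlt, hlt.le, true_and]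

theorem isLeast_self_iff {f : ℕ → ℕ} {i fuel p : ℕ} (hp : f.IsPeriodicPt p i) (hp₀ : 0 < p)
    (hfuel : p ≤ fuel) : isLeast f i fuel i = true ↔ ∀ n, i ≤ f^[n] i := by
  rw [isLeast_iff]
  refine ⟨fun h => ?_, fun h n _ _ => h (n + 1)⟩
  have hreturn : ∃ m, f^[m + 1] i ≤ i := ⟨p - 1, by rw [Nat.sub_add_cancel hp₀]; exact hp.eq.le⟩
  let m := Nat.find hreturn
  have hm : m < fuel := by
    have : m ≤ p - 1 := Nat.find_min' hreturn (by rw [Nat.sub_add_cancel hp₀]; exact hp.eq.le)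
    omega
  have hlt (l : ℕ) (hl : l < m) : i < f^[l + 1] i := not_le.1 (Nat.find_min hreturn hl)
  have hperiod : f.IsPeriodicPt (m + 1) i := (Nat.find_spec hreturn).antisymm (h m hm hlt)
  intro n
  rw [← hperiod.iterate_mod_apply]
  have hmod : n % (m + 1) < m + 1 := Nat.mod_lt n m.succ_pos
  rcases hl : n % (m + 1) with _ | l
  · exact le_rfl
  · exact (hlt l (by omega)).le

namespace Complete

variable {t : CosetTable} (h : t.Complete)

theorem card_coset : Nat.card h.Coset = t.size := by
  rw [Nat.card_congr h.cosetEquiv, Nat.card_eq_fintype_card, Fintype.card_coe, cosets, Nat.card_Icc,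
    Nat.add_sub_cancel]

theorem index_subgroup : h.subgroup.index = t.size :=
  (MulAction.index_stabilizer_of_transitive PSL2Z h.base).trans h.card_coset

theorem nFix_word_subgroup (k : ℕ) :
    nFix (word k) h.subgroup = (t.cosets.filter fun i => t.act k i = i).card := by
  rw [subgroup, nFix_stabilizer, ← h.card_subtype_coset]
  exact Nat.card_congr (Equiv.subtypeEquivRight fun i => by rw [Coset.ext_iff, val_word_smul])

theorem tfIdx_subgroup : tfIdx h.subgroup = t.weight :=
  (congrArg₂ (· + 2 * ·) (congrArg₂ (· + 3 * ·) h.index_subgroup (h.nFix_word_subgroup 0))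
    (h.nFix_word_subgroup 1)).trans h.valid.weight_eq.symm

theorem nOrb_Tp_subgroup : nOrb Tp h.subgroup = t.cycles := by
  rw [subgroup, nOrb_stabilizer, card_orbits_eq_card_least, cycles, countTo_eq_card]
  refine Eq.trans (Nat.card_congr (Equiv.subtypeEquivRight fun i => ?_)) (h.card_subtype_coset _)
  have hmem : i ∈ Function.periodicPts (Tp • · : h.Coset → h.Coset) :=
    (MulAction.injective Tp).mem_periodicPts i
  have hle : Function.minimalPeriod (Tp • ·) i ≤ t.size := by
    have := Fintype.ofFinite h.Coset
    rw [← h.card_coset, Nat.card_eq_fintype_card]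
    exact Function.minimalPeriod_le_card
  have hperiod : (t.s ∘ t.u).IsPeriodicPt (Function.minimalPeriod (Tp • ·) i) i.val :=
    (val_pow_Tp_smul _ i).symm.trans <| congrArg Coset.val <|
      MulAction.pow_smul_eq_iff_minimalPeriod_dvd.2 dvd_rfl
  rw [iff_comm]
  have hpos := Function.minimalPeriod_pos_of_mem_periodicPts hmem
  refine (isLeast_self_iff hperiod hpos hle).trans ?_
  exact forall_congr' fun n => by rw [← val_pow_Tp_smul]; rfl

end Complete

end CosetTable

section Equivariant

open MulAction

variable {G X : Type*} [Group G] [MulAction G X] [IsPretransitive G X] {x y : X}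

theorem exists_mulActionHom_of_stabilizer_le (h : stabilizer G x ≤ stabilizer G y) :
    ∃ φ : X →[G] X, φ x = y := by
  choose g hg using exists_smul_eq G x
  have hsmul {a b : G} (hab : a • x = b • x) : a • y = b • y := by
    rw [← inv_smul_eq_iff, smul_smul, ← mem_stabilizer_iff] at hab ⊢
    exact h hab
  refine ⟨⟨fun z => g z • y, fun a z => ?_⟩, ?_⟩
  · rw [smul_smul]
    exact hsmul (by rw [hg, mul_smul, hg]; rfl)
  · exact (hsmul (by rw [hg, one_smul])).trans (one_smul G y)

theorem stabilizer_eq_of_le [Finite X] (h : stabilizer G x ≤ stabilizer G y) :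
    stabilizer G y = stabilizer G x := by
  obtain ⟨φ, rfl⟩ := exists_mulActionHom_of_stabilizer_le h
  have hsurj : Function.Surjective φ := fun z => by
    obtain ⟨g, rfl⟩ := exists_smul_eq G (φ x) z
    exact ⟨g • x, map_smul φ g x⟩
  refine h.antisymm' fun g hg => Finite.injective_iff_surjective.2 hsurj ?_
  rwa [map_smul]

end Equivariant

namespace CosetTable

open PSL2Z

variable {t : CosetTable} {i j n r : ℕ}

theorem Valid.s_le_size (ht : t.Valid) (i : ℕ) : t.s i ≤ t.size := by
  by_cases h : t.s i = 0
  · omega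
  · exact (mem_cosets.1 (ht.s_mem h)).2

theorem Valid.u_le_size (ht : t.Valid) (i : ℕ) : t.u i ≤ t.size := by
  by_cases h : t.u i = 0
  · omega
  · exact (mem_cosets.1 (ht.u_mem (ht.mem_of_u_ne_zero h))).2

theorem image_one : t.image r 1 = setEntry 0 1 r :=
  force_eq (setEntry 0 1 r) fun F => F

theorem image_succ (hn : 1 ≤ n) : t.image r (n + 1) = setEntry (t.image r n) (n + 1)
    (if t.u n = n + 1 then t.u (entry (t.image r n) n)
      else t.s (entry (t.image r n) (t.s (n + 1)))) := by
  have hstep : t.image r (n + 1) = force (t.image r n) fun F =>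
      select (Nat.beq n 0) F (setEntry F (Nat.succ n)
        (select (Nat.beq (t.u n) (Nat.succ n)) (t.u (entry F n))
          (t.s (entry F (t.s (Nat.succ n)))))) := rfl
  rw [hstep, force_eq, select_eq_ite, select_eq_ite, if_neg (by simp; omega)]
  simp only [Nat.beq_eq, Nat.succ_eq_add_one]

theorem entry_image_succ (ht : t.Valid) (hsize : t.size < 37) (hn : 1 ≤ n)
    (hnew : entry (t.image r n) (n + 1) = 0) (j : ℕ) :
    entry (t.image r (n + 1)) j = if j = n + 1 then
      (if t.u n = n + 1 then t.u (entry (t.image r n) n)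
        else t.s (entry (t.image r n) (t.s (n + 1))))
      else entry (t.image r n) j := by
  rw [image_succ hn, entry_setEntry hnew]
  split_ifs
  · exact (ht.u_le_size _).trans_lt hsize
  · exact (ht.s_le_size _).trans_lt hsize

theorem entry_image_eq_zero (ht : t.Valid) (hsize : t.size < 37) (hr : r < 37) (hn : 1 ≤ n) :
    ∀ j > n, entry (t.image r n) j = 0 := by
  induction n, hn using Nat.le_induction with
  | base =>
    intro j hj
    rw [image_one, entry_setEntry (entry_zero 1) hr, if_neg hj.ne', entry_zero]
  | succ n hn ih =>
    intro j hj
    rw [entry_image_succ ht hsize hn (ih _ n.lt_succ_self), if_neg hj.ne', ih j (by omega)]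

theorem entry_image_one (ht : t.Valid) (hsize : t.size < 37) (hr : r < 37) (hn : 1 ≤ n) :
    entry (t.image r n) 1 = r := by
  induction n, hn using Nat.le_induction with
  | base => rw [image_one, entry_setEntry (entry_zero 1) hr, if_pos rfl]
  | succ n hn ih =>
    rw [entry_image_succ ht hsize hn (entry_image_eq_zero ht hsize hr hn _ n.lt_succ_self),
      if_neg (by omega), ih]

theorem isAut_iff : t.isAut r = true ↔ ∀ i ∈ t.cosets,
    entry (t.image r t.size) (t.s i) = t.s (entry (t.image r t.size) i) ∧
      entry (t.image r t.size) (t.u i) = t.u (entry (t.image r t.size) i) := by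
  rw [isAut, force_eq, allTo_iff]
  simp [select_eq_ite, cosets]

namespace Complete

variable {h : t.Complete}

theorem entry_image_eq (hsize : t.size < 37) (φ : h.Coset →[PSL2Z] h.Coset) (hn : 1 ≤ n) :
    ∀ i : h.Coset, i.val ≤ n → entry (t.image (φ h.base).val n) i.val = (φ i).val := by
  have hr : (φ h.base).val < 37 := (mem_cosets.1 (φ h.base).mem).2.trans_lt hsize
  induction n, hn using Nat.le_induction with
  | base =>
    intro i hi
    obtain rfl : i = h.base := Coset.ext (hi.antisymm (mem_cosets.1 i.mem).1)
    exact entry_image_one h.valid hsize hr le_rfl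
  | succ n hn ih =>
    intro i hi
    rw [entry_image_succ h.valid hsize hn
      (entry_image_eq_zero h.valid hsize hr hn _ n.lt_succ_self)]
    split_ifs with hin hu
    · have hle := (mem_cosets.1 i.mem).2
      obtain ⟨j, hj⟩ : ∃ j : h.Coset, j.val = n := ⟨⟨n, mem_cosets.2 ⟨hn, by omega⟩⟩, rfl⟩
      obtain rfl : U • j = i := Coset.ext (by rw [val_U_smul, hin, hj, hu])
      rw [map_smul, val_U_smul, ← ih j hj.le, hj]
    · obtain ⟨-, hle⟩ := (h.rooted n hn (hin ▸ (mem_cosets.1 i.mem).2)).resolve_right hu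
      rw [← hin, ← val_Sp_smul] at hle ⊢
      rw [ih _ hle, map_smul, ← val_Sp_smul, Sp_smul_Sp_smul]
    · exact ih i (by omega)

theorem isAut_iff_stabilizer_eq (hsize : t.size < 37) (r : h.Coset) :
    t.isAut r.val = true ↔ MulAction.stabilizer PSL2Z r = h.subgroup := by
  have hr : r.val < 37 := (mem_cosets.1 r.mem).2.trans_lt hsize
  rw [isAut_iff]
  constructor
  · intro haut
    have hsmul (g : PSL2Z) : entry (t.image r.val t.size) (g • h.base).val = (g • r).val := by
      induction g using induction_Sp_U with
      | one =>
        rw [one_smul, one_smul]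
        exact entry_image_one h.valid hsize hr h.one_le_size
      | Sp_mul g ih =>
        rw [mul_smul, val_Sp_smul, (haut _ (g • h.base).mem).1, ih, mul_smul, val_Sp_smul]
      | U_mul g ih =>
        rw [mul_smul, val_U_smul, (haut _ (g • h.base).mem).2, ih, mul_smul, val_U_smul]
    refine stabilizer_eq_of_le fun g hg => Coset.ext ?_
    show (g • r).val = r.val
    rw [← hsmul, MulAction.mem_stabilizer_iff.1 hg]
    exact entry_image_one h.valid hsize hr h.one_le_size
  · intro hstab
    obtain ⟨φ, rfl⟩ := exists_mulActionHom_of_stabilizer_le hstab.ge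
    have himage (i : h.Coset) : entry (t.image (φ h.base).val t.size) i.val = (φ i).val :=
      entry_image_eq hsize φ h.one_le_size i (mem_cosets.1 i.mem).2
    intro i hi
    obtain ⟨i, rfl⟩ : ∃ i' : h.Coset, i'.val = i := ⟨⟨i, hi⟩, rfl⟩
    rw [← val_Sp_smul, ← val_U_smul, himage, himage, himage, map_smul, map_smul, val_Sp_smul,
      val_U_smul]
    exact ⟨rfl, rfl⟩

end Complete

end CosetTable

namespace CosetTable

open PSL2Z

variable {t : CosetTable} {d e k : ℕ}

namespace Complete

variable (h : t.Complete)

theorem mass_eq (f : Subgroup PSL2Z → ℝ≥0∞) :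
    mass f t = selfStabilized h.subgroup * f h.subgroup := by
  rw [mass, tsum_eq_single h.subgroup fun Γ hΓ => if_neg (mt h.compat_iff_eq_subgroup.1 hΓ),
    if_pos (h.compat_iff_eq_subgroup.2 rfl)]

theorem counted_subgroup_iff : Counted h.subgroup ↔ t.weight = 24 ∧
    t.cycles + (t.cosets.filter fun i => t.s i = i).card +
      (t.cosets.filter fun i => t.u i = i).card = 6 := by
  have hindex : h.subgroup.index ≠ 0 := by
    have := h.one_le_size
    rw [index_subgroup]
    omega
  have hS : nFix Sp h.subgroup = (t.cosets.filter fun i => t.s i = i).card :=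
    h.nFix_word_subgroup 0
  have hU : nFix U h.subgroup = (t.cosets.filter fun i => t.u i = i).card :=
    h.nFix_word_subgroup 1
  constructor
  · rintro ⟨-, hgenus, htf⟩
    rw [genusZero_iff_of_tfIdx_eq hindex htf, hS, hU, nOrb_Tp_subgroup] at hgenus
    exact ⟨h.tfIdx_subgroup ▸ htf, hgenus⟩
  · rintro ⟨hweight, hgenus⟩
    have htf : tfIdx h.subgroup = 24 := h.tfIdx_subgroup.trans hweight
    rw [← nOrb_Tp_subgroup h, ← hS, ← hU, ← genusZero_iff_of_tfIdx_eq hindex htf] at hgenus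
    exact ⟨hindex, hgenus, htf⟩

theorem word_mem_subgroup_iff : word k ∈ h.subgroup ↔ t.act k 1 = 1 := by
  rw [subgroup, MulAction.mem_stabilizer_iff, Coset.ext_iff, val_word_smul]
  rfl

theorem hasRootType_subgroup_iff : HasRootType k h.subgroup ↔
    t.act k 1 = 1 ∧ ∀ i ∈ t.cosets, t.avoids k i = true := by
  simp only [HasRootType, word_mem_subgroup_iff, nFix_word_subgroup, Finset.card_eq_zero,
    Finset.filter_eq_empty_iff, avoids_iff]
  grind

theorem selfStabilized_subgroup (hsize : t.size < 37) (hk : t.act k 1 = 1) :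
    selfStabilized h.subgroup =
      (t.cosets.filter fun r => t.act k r = r ∧ (r = 1 ∨ t.isAut r = true)).card := by
  rw [subgroup, selfStabilized_stabilizer, ← h.card_subtype_coset, ← ENat.card_eq_coe_natCard]
  refine ENat.card_congr (Equiv.subtypeEquivRight fun r => ?_)
  rw [isAut_iff_stabilizer_eq hsize r]
  constructor
  · intro hr
    have hmem : word k ∈ MulAction.stabilizer PSL2Z r := hr ▸ h.word_mem_subgroup_iff.2 hk
    exact ⟨by rw [← val_word_smul, MulAction.mem_stabilizer_iff.1 hmem], .inr hr⟩
  · rintro ⟨-, hr | hr⟩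
    · rw [show r = h.base from Coset.ext hr]
    · exact hr

end Complete

theorem value_eq_ite (k : ℕ) (t : CosetTable) : t.value k =
    if (t.weight = 24 ∧ t.cycles + (t.cosets.filter fun i => t.s i = i).card +
        (t.cosets.filter fun i => t.u i = i).card = 6) ∧
      t.act k 1 = 1 ∧ ∀ i ∈ t.cosets, t.avoids k i = true then
      Nat.factorial 24 / (t.cosets.filter fun i => t.act k i = i).card *
        (t.cosets.filter fun r => t.act k r = r ∧ (r = 1 ∨ t.isAut r = true)).card
    else 0 := by
  simp only [value, select_eq_ite, Nat.beq_eq, allTo_iff, countTo_eq_card, cosets, ← ite_and]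
  refine if_congr (by tauto) ?_ rfl
  congr 3 with r
  split_ifs <;> simp_all

theorem Complete.value_eq (h : t.Complete) (hsize : t.size < 37) (k : ℕ) :
    (t.value k : ℝ≥0∞) = mass (share k) t := by
  rw [h.mass_eq, share, h.counted_subgroup_iff, h.hasRootType_subgroup_iff, value_eq_ite]
  split_ifs with hcond
  · rw [h.selfStabilized_subgroup hsize hcond.2.1, h.nFix_word_subgroup]
    push_cast
    exact mul_comm _ _
  · rw [Nat.cast_zero, mul_zero]

/-- The tables met in the search when `S • d` is the next image to be defined. -/
structure Reached (d : ℕ) (t : CosetTable) : Prop where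
  valid : t.Valid
  rooted : t.Rooted
  one_le : 1 ≤ d
  le_size : d ≤ t.size + 1
  one_le_size : 1 ≤ t.size
  s_ne_zero {i : ℕ} : 1 ≤ i → i < d → t.s i ≠ 0

namespace Reached

theorem close (h : t.Reached d) (hd : t.s d = 0) (hd' : d ∈ t.cosets) (he : t.s e = 0)
    (he' : e ∈ t.cosets) (hsize : t.size < 37) : (t.close d e).Reached (d + 1) := by
  have hd₁ := mem_cosets.1 hd'
  have he₁ := mem_cosets.1 he'
  have hs := s_close hd he (by omega) (by omega)
  refine ⟨h.valid.close hd he hd' he' hsize, h.rooted.close hd he hd' he' hsize, by omega, ?_, ?_,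
    fun {i} hi hi' => ?_⟩
  · rw [size_close]
    omega
  · rw [size_close]
    exact h.one_le_size
  · rw [hs]
    grind [h.s_ne_zero (i := i) hi]

theorem addLoop_close (h : t.Reached d) (hd : t.s d = 0) (hd' : d ∈ t.cosets)
    (hsize : t.size + 1 < 37) : (t.addLoop.close d (t.size + 1)).Reached (d + 1) := by
  have hd₁ := mem_cosets.1 hd'
  have h₀ : t.s (t.size + 1) = 0 := h.valid.s_eq_zero t.size.lt_succ_self
  have hs := s_close (t := t.addLoop) hd h₀ (by omega) (by omega)
  refine ⟨(h.valid.addLoop hsize).close hd h₀ ?_ ?_ hsize,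
    h.rooted.addLoop_close h.valid hd hd' hsize, by omega, ?_, ?_, fun {i} hi hi' => ?_⟩
  · exact mem_cosets.2 ⟨hd₁.1, hd₁.2.trans (Nat.le_succ _)⟩
  · exact mem_cosets.2 ⟨by omega, le_rfl⟩
  · rw [size_close, CosetTable.addLoop]
    change d + 1 ≤ t.size + 1 + 1
    omega
  · rw [size_close]
    exact Nat.le_add_left ..
  · rw [hs, s_addLoop]
    grind [h.s_ne_zero (i := i) hi]

theorem addTriangle_close (h : t.Reached d) (hd : t.s d = 0) (hd' : d ∈ t.cosets)
    (hsize : t.size + 3 < 37) : (t.addTriangle.close d (t.size + 1)).Reached (d + 1) := by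
  have hd₁ := mem_cosets.1 hd'
  have h₀ : t.s (t.size + 1) = 0 := h.valid.s_eq_zero t.size.lt_succ_self
  have hs := s_close (t := t.addTriangle) hd h₀ (by omega) (by omega)
  refine ⟨(h.valid.addTriangle hsize).close hd h₀ ?_ ?_ hsize,
    h.rooted.addTriangle_close h.valid hd hd' hsize, by omega, ?_, ?_, fun {i} hi hi' => ?_⟩
  · exact mem_cosets_addTriangle.2 (.inl hd')
  · exact mem_cosets_addTriangle.2 (.inr (.inl rfl))
  · rw [size_close]
    change d + 1 ≤ t.size + 3 + 1
    omega
  · rw [size_close]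
    exact Nat.le_add_left 1 (t.size + 2)
  · rw [hs, s_addTriangle]
    grind [h.s_ne_zero (i := i) hi]

theorem succ (h : t.Reached d) (hd : t.s d ≠ 0) : t.Reached (d + 1) where
  valid := h.valid
  rooted := h.rooted
  one_le := by omega
  le_size := Nat.succ_le_succ (mem_cosets.1 (h.valid.mem_of_s_ne_zero hd)).2
  one_le_size := h.one_le_size
  s_ne_zero {i} hi hi' := by
    rcases Nat.lt_succ_iff_lt_or_eq.1 hi' with hi' | rfl
    · exact h.s_ne_zero hi hi'
    · exact hd

theorem complete (h : t.Reached d) (hd : t.size < d) : t.Complete where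
  valid := h.valid
  rooted := h.rooted
  one_le_size := h.one_le_size
  s_ne_zero {i} hi := by
    have := mem_cosets.1 hi
    exact h.s_ne_zero this.1 (by omega)

end Reached

theorem Valid.size_le_weight (ht : t.Valid) : t.size ≤ t.weight := by
  have := ht.weight_eq
  omega

theorem eval_eq {α : Type} (t : CosetTable) (f : CosetTable → α) : t.eval f = f t := by
  simp only [eval, force_eq]

theorem visit_eq {next : ℕ → CosetTable → ℕ} (h : t.Reached (d + 1)) (hd : 1 ≤ d)
    (hnext : t.weight ≤ 24 → (next (d + 1) t : ℝ≥0∞) = mass (share k) t) :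
    (t.visit k d next : ℝ≥0∞) = mass (share k) t := by
  rw [visit, eval_eq, force_eq, select_eq_ite]
  split_ifs with hok
  · exact hnext (ok_iff.1 hok).1
  · rw [Nat.cast_zero, mass_share_eq_zero_of_not_ok h.valid (h.s_ne_zero hd d.lt_succ_self)
      (eq_false_of_ne_true hok)]

theorem branch_eq {next : ℕ → CosetTable → ℕ} (h : t.Reached d) (hd : t.s d = 0)
    (hd' : d ∈ t.cosets) (hw : t.weight ≤ 24)
    (hnext : ∀ t' : CosetTable, t'.Reached (d + 1) → t'.weight ≤ 24 →
      (next (d + 1) t' : ℝ≥0∞) = mass (share k) t') :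
    (t.branch k d next : ℝ≥0∞) = mass (share k) t := by
  have hsize := h.valid.size_le_weight
  have hvisit {t' : CosetTable} (h' : t'.Reached (d + 1)) :
      (t'.visit k d next : ℝ≥0∞) = mass (share k) t' :=
    visit_eq h' h.one_le (hnext t' h')
  rw [mass_eq_sum_branch _ h.valid h.rooted hd hd' (by omega), branch, sumTo_eq_sum]
  push_cast
  rw [hvisit (h.addLoop_close hd hd' (by omega)), hvisit (h.addTriangle_close hd hd' (by omega)),
    Finset.sum_filter, cosets]
  congr 1
  refine Finset.sum_congr rfl fun e he => ?_
  simp only [select_eq_ite, Nat.beq_eq]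
  split_ifs with he₀
  · exact hvisit (h.close hd hd' he₀ he (by omega))
  · exact Nat.cast_zero

theorem search_eq {fuel : ℕ} (h : t.Reached d) (hw : t.weight ≤ 24) (hfuel : 26 ≤ fuel + d) :
    (search k fuel d t : ℝ≥0∞) = mass (share k) t := by
  have hle := h.le_size
  have hsize := h.valid.size_le_weight
  induction fuel generalizing d t with
  | zero => omega
  | succ fuel ih =>
    have hstep : search k (fuel + 1) d t = select (Nat.ble d t.size)
      (select (Nat.beq (t.s d) 0) (t.branch k d (search k fuel))
        (force (Nat.succ d) fun d => search k fuel d t)) (t.value k) := rfl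
    have ih' {t' : CosetTable} (h' : t'.Reached (d + 1)) (hw' : t'.weight ≤ 24) :
        (search k fuel (d + 1) t' : ℝ≥0∞) = mass (share k) t' :=
      ih h' hw' (by omega) h'.le_size h'.valid.size_le_weight
    rw [hstep, force_eq]
    simp only [select_eq_ite, Nat.ble_eq, Nat.beq_eq]
    split_ifs with hd hs
    · exact branch_eq h hs (mem_cosets.2 ⟨h.one_le, hd⟩) hw fun t' => ih'
    · exact ih' (h.succ hs) hw
    · exact (h.complete (not_le.1 hd)).value_eq (by omega) k

section Start

variable {X : Type*} [MulAction PSL2Z X] {x : X}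

theorem isLabelling_empty (c : ℕ → X) : empty.IsLabelling c where
  s_smul h := (h (entry_zero _)).elim
  u_smul h := (Finset.notMem_empty _ h).elim
  injOn _ h := (Finset.notMem_empty _ h).elim

theorem compat_empty_addLoop_iff : empty.addLoop.Compat x ↔ U • x = x := by
  have hiff (c : ℕ → X) := isLabelling_addLoop (c := c) Valid.empty (by norm_num [empty])
  constructor
  · rintro ⟨c, hc, rfl⟩
    exact ((hiff c).1 hc).2.2
  · exact fun hx => ⟨fun _ => x, (hiff _).2 ⟨isLabelling_empty _, by simp [cosets, empty], hx⟩, rfl⟩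

theorem compat_empty_addTriangle_iff : empty.addTriangle.Compat x ↔ U • x ≠ x := by
  have hsize : empty.size + 3 < 37 := by norm_num [empty]
  constructor
  · rintro ⟨c, hc, rfl⟩
    exact (hc.of_addTriangle Valid.empty hsize).2.2
  · intro hx
    let c (i : ℕ) : X := U ^ (i - 1) • x
    have h₁ : c 1 = x := one_smul _ _
    have h₂ : c 2 = U • c 1 := by simp [c]
    have h₃ : c 3 = U • c 2 := by simp [c, sq, mul_smul]
    exact ⟨c, (isLabelling_empty c).addTriangle Valid.empty hsize (by simp [cosets, empty])
      (by rwa [show c (empty.size + 1) = x from h₁]) h₂ h₃, h₁⟩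

theorem mass_start (f : Subgroup PSL2Z → ℝ≥0∞) :
    mass f empty.addLoop + mass f empty.addTriangle = ∑' Γ, selfStabilized Γ * f Γ := by
  rw [mass, mass, ← ENNReal.tsum_add]
  refine tsum_congr fun Γ => ?_
  rw [compat_empty_addLoop_iff, compat_empty_addTriangle_iff]
  split_ifs <;> simp_all

end Start

theorem reached_empty_addLoop : empty.addLoop.Reached 1 where
  valid := Valid.empty.addLoop (by norm_num [empty])
  rooted i hi hi' := by
    change i + 1 ≤ 1 at hi'
    omega
  one_le := le_rfl
  le_size := by norm_num [empty]
  one_le_size := le_rfl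
  s_ne_zero _ _ := by omega

theorem reached_empty_addTriangle : empty.addTriangle.Reached 1 where
  valid := Valid.empty.addTriangle (by norm_num [empty])
  rooted i hi hi' := by
    obtain ⟨-, h₁, h₂, -⟩ := Valid.empty.u_addTriangle_cases (by norm_num [empty])
    change i + 1 ≤ 3 at hi'
    obtain rfl | rfl : i = 1 ∨ i = 2 := by omega
    · exact .inr h₁
    · exact .inr h₂
  one_le := le_rfl
  le_size := by norm_num [empty]
  one_le_size := by norm_num [empty, addTriangle]
  s_ne_zero _ _ := by omega

theorem total_eq (k : ℕ) : (total k : ℝ≥0∞) = ∑' Γ, selfStabilized Γ * share k Γ := by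
  rw [total, eval_eq, eval_eq, Nat.cast_add,
    search_eq reached_empty_addLoop (by norm_num [empty, addLoop]) le_rfl,
    search_eq reached_empty_addTriangle (by norm_num [empty, addTriangle]) le_rfl, mass_start]

end CosetTable

namespace CosetTable

open PSL2Z

variable {A : Subgroup PSL2Z} {k : ℕ}

open scoped Classical in
theorem share_stabilizer (hA : Counted A) (x : PSL2Z ⧸ A) :
    share k (MulAction.stabilizer PSL2Z x) =
      if word k • x = x then
        if ∀ j < k, nFix (word j) A = 0 then ((Nat.factorial 24 / nFix (word k) A : ℕ) : ℝ≥0∞)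
        else 0
      else 0 := by
  have hconj : SubgroupConj A (MulAction.stabilizer PSL2Z x) :=
    SubgroupConj.iff_exists_stabilizer_eq.2 ⟨x, rfl⟩
  simp only [share, HasRootType, hA.congr hconj, true_and, MulAction.mem_stabilizer_iff,
    hconj.nFix_eq, ← ite_and]

open scoped Classical in
theorem tsum_share_stabilizer (hA : Counted A) (k : ℕ) :
    ∑' x : PSL2Z ⧸ A, share k (MulAction.stabilizer PSL2Z x) = nFix (word k) A *
      if ∀ j < k, nFix (word j) A = 0 then ((Nat.factorial 24 / nFix (word k) A : ℕ) : ℝ≥0∞)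
      else 0 := by
  have : A.FiniteIndex := ⟨hA.1⟩
  simp only [share_stabilizer hA]
  generalize (if ∀ j < k, nFix (word j) A = 0 then _ else 0 : ℝ≥0∞) = z
  calc ∑' x : PSL2Z ⧸ A, (if word k • x = x then z else 0)
      = ∑' _ : {x : PSL2Z ⧸ A // word k • x = x}, z := by
        refine Eq.trans ?_ (tsum_subtype {x : PSL2Z ⧸ A | word k • x = x} fun _ => z).symm
        simp only [Set.indicator_apply, Set.mem_ofPred_eq]
    _ = nFix (word k) A * z := by
      rw [ENNReal.tsum_const, ENat.card_eq_coe_natCard]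
      rfl

theorem tsum_sum_share_stabilizer (hA : Counted A) :
    ∑' x : PSL2Z ⧸ A, ∑ k ∈ Finset.range 6, share k (MulAction.stabilizer PSL2Z x) =
      Nat.factorial 24 := by
  classical
  obtain ⟨m, hm, hne⟩ := hA.exists_nFix_word_ne_zero
  have hex : ∃ k, nFix (word k) A ≠ 0 := ⟨m, hne⟩
  have hmin (j : ℕ) (hj : j < Nat.find hex) : nFix (word j) A = 0 := not_not.1 (Nat.find_min hex hj)
  rw [Summable.tsum_finsetSum fun _ _ => ENNReal.summable]
  simp only [tsum_share_stabilizer hA]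
  rw [Finset.sum_eq_single_of_mem (Nat.find hex)
    (Finset.mem_range.2 ((Nat.find_min' hex hne).trans_lt hm)), if_pos hmin, ← Nat.cast_mul,
    Nat.mul_div_cancel']
  · exact Nat.dvd_factorial (Nat.pos_of_ne_zero (Nat.find_spec hex)) (hA.nFix_le _)
  · rintro k - hk
    rcases hk.lt_or_gt with hk | hk
    · simp only [hmin k hk, Nat.cast_zero, zero_mul]
    · rw [if_neg fun h => Nat.find_spec hex (h _ hk), mul_zero]

set_option maxRecDepth 100000 in
theorem total_zero : total 0 = 2051 * Nat.factorial 24 := by decide +kernel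

set_option maxRecDepth 100000 in
theorem total_one : total 1 = 720 * Nat.factorial 24 := by decide +kernel

set_option maxRecDepth 100000 in
theorem total_two : total 2 = 171 * Nat.factorial 24 := by decide +kernel

set_option maxRecDepth 100000 in
theorem total_three : total 3 = 17 * Nat.factorial 24 := by decide +kernel

set_option maxRecDepth 100000 in
theorem total_four : total 4 = 2 * Nat.factorial 24 := by decide +kernel

set_option maxRecDepth 100000 in
theorem total_five : total 5 = Nat.factorial 24 := by decide +kernel

theorem sum_total : ∑ k ∈ Finset.range 6, total k = 2962 * Nat.factorial 24 := by
  simp only [Finset.sum_range_succ, Finset.sum_range_zero, total_zero, total_one, total_two,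
    total_three, total_four, total_five]
  ring

theorem tsum_selfStabilized_mul_sum_share :
    ∑' Γ, selfStabilized Γ * ∑ k ∈ Finset.range 6, share k Γ =
      (2962 : ℕ) * (Nat.factorial 24 : ℝ≥0∞) := by
  simp only [Finset.mul_sum]
  rw [Summable.tsum_finsetSum fun _ _ => ENNReal.summable]
  simp only [← total_eq]
  exact_mod_cast sum_total

end CosetTable

/-- There are exactly 2962 conjugacy classes of genus-zero finite-index subgroups `Γ` of
`PSL(2,ℤ)` with `n + 3e₂ + 2e₃ = 24`. -/
theorem count_K24 :
    countClasses (fun Γ => Γ.index ≠ 0 ∧ GenusZero Γ ∧ tfIdx Γ = 24) = 2962 := by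
  refine countClasses_eq_of_tsum_eq
    (f := fun Γ => ∑ k ∈ Finset.range 6, CosetTable.share k Γ) (N := Nat.factorial 24)
    Counted.congr (fun Γ hΓ => ?_) ?_ (ENNReal.natCast_ne_top _)
    (fun _ => CosetTable.tsum_sum_share_stabilizer) CosetTable.tsum_selfStabilized_mul_sum_share
  · exact Finset.sum_eq_zero fun k _ => if_neg fun h => hΓ h.1
  · exact Nat.cast_ne_zero.2 (Nat.factorial_ne_zero 24)
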